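/- Let k ≥ 1 be a fixed integer and let K_n, P_n, p_n be scalings with K_n ≥ 2 for all sufficiently large n, P_n = Ω(n), and K_n/P_n = o(1). Define α_n by p_e = (ln n + (k−1)·ln ln n + α_n)/n. If lim_{n→∞} α_n = +∞, then P[𝔾_on(n,K_n,P_n,p_n) is k-connected] → 1 and P[the minimum vertex degree of 𝔾_on(n,K_n,P_n,p_n) is at least k] → 1 as n → ∞. -/

import Mathlib

open MeasureTheory Filter Asymptotics
open scoped ENNReal

noncomputable section

/-- Key rings: `K`-element subsets of a key pool of size `P`. -/
abbrev KeyRing (P K : ℕ) : Type := {s : Finset (Fin P) // s.card = K}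

instance (P K : ℕ) : MeasurableSpace (KeyRing P K) := ⊤

/-- The uniform probability measure on key rings. -/
def uniformKeyMeasure (P K : ℕ) : Measure (KeyRing P K) :=
  (Fintype.card (KeyRing P K) : ℝ≥0∞)⁻¹ • (Measure.count : Measure (KeyRing P K))

/-- The Bernoulli measure with parameter `p` on `Bool`. -/
def bern (p : ℝ) : Measure Bool :=
  ENNReal.ofReal p • Measure.dirac true + ENNReal.ofReal (1 - p) • Measure.dirac false

/-- Sample space underlying `𝔾_on(n, K, P, p)`: independent key rings for the `n`
nodes together with independent on/off channel states for each pair of nodes. -/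
abbrev GonSpace (n K P : ℕ) : Type :=
  (Fin n → KeyRing P K) × (Sym2 (Fin n) → Bool)

/-- The probability measure of the model `𝔾_on(n, K, P, p)`: the key rings of the
`n` nodes are independent and uniform, and the channels are independent
Bernoulli(`p`) variables, independent of the key rings. -/
def gonMeasure (n K P : ℕ) (p : ℝ) : Measure (GonSpace n K P) :=
  (Measure.pi fun _ : Fin n => uniformKeyMeasure P K).prod
    (Measure.pi fun _ : Sym2 (Fin n) => bern p)

/-- The random graph `𝔾_on`: an edge is present iff the key rings intersect and the
channel between the two nodes is on. -/
def gonGraph {n K P : ℕ} (ω : GonSpace n K P) : SimpleGraph (Fin n) where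
  Adj i j := i ≠ j ∧ ((ω.1 i).1 ∩ (ω.1 j).1).Nonempty ∧ ω.2 s(i, j) = true
  symm := by
    constructor
    rintro i j ⟨h1, h2, h3⟩
    exact ⟨h1.symm, by rwa [Finset.inter_comm], by rwa [Sym2.eq_swap]⟩
  loopless := ⟨fun i h => h.1 rfl⟩

/-- The random key graph `G(n, K, P)`: an edge is present iff the key rings intersect. -/
def rkgGraph {n K P : ℕ} (ω : Fin n → KeyRing P K) : SimpleGraph (Fin n) where
  Adj i j := i ≠ j ∧ ((ω i).1 ∩ (ω j).1).Nonempty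
  symm := by
    constructor
    rintro i j ⟨h1, h2⟩
    exact ⟨h1.symm, by rwa [Finset.inter_comm]⟩
  loopless := ⟨fun i h => h.1 rfl⟩

/-- The probability measure of the random key graph model. -/
def rkgMeasure (n K P : ℕ) : Measure (Fin n → KeyRing P K) :=
  Measure.pi fun _ : Fin n => uniformKeyMeasure P K

/-- Degree of a vertex. -/
def gDeg {V : Type*} (G : SimpleGraph V) (v : V) : ℕ := Nat.card {w // G.Adj v w}

/-- Minimum vertex degree. -/
def minDeg {V : Type*} (G : SimpleGraph V) : ℕ := sInf (Set.range (gDeg G))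

/-- A graph is `k`-connected if it remains connected after the removal of any
`k - 1` of its vertices. -/
def KConnected {V : Type*} (G : SimpleGraph V) (k : ℕ) : Prop :=
  ∀ S : Finset V, S.card ≤ k - 1 → (G.induce ((S : Set V)ᶜ)).Connected

/-- Vertex connectivity: the least number of vertices whose deletion disconnects
the graph. -/
def vertexConn {V : Type*} (G : SimpleGraph V) : ℕ :=
  sInf {m | ∃ S : Finset V, S.card = m ∧ ¬ (G.induce ((S : Set V)ᶜ)).Connected}

/-- `p_s`: the probability that two key rings share at least one key. -/
def psf (K P : ℕ) : ℝ :=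
  if 2 * K ≤ P then 1 - (Nat.choose (P - K) K : ℝ) / (Nat.choose P K : ℝ) else 1

/-- `p_e = p · p_s`: the probability of an edge in `𝔾_on`. -/
def pef (K P : ℕ) (p : ℝ) : ℝ := p * psf K P

/-- The event `D_{x,ℓ}` that the node with index `x` has degree exactly `ℓ`. -/
def degEvent (n K P : ℕ) (x ℓ : ℕ) : Set (GonSpace n K P) :=
  {ω | ∃ hx : x < n, gDeg (gonGraph ω) ⟨x, hx⟩ = ℓ}

/-- The event `E_{xy}` that the edge between the nodes with indices `x`, `y` is present. -/
def edgeEvent (n K P : ℕ) (x y : ℕ) : Set (GonSpace n K P) :=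
  {ω | ∃ (hx : x < n) (hy : y < n), (gonGraph ω).Adj ⟨x, hx⟩ ⟨y, hy⟩}

/-- The event that the key rings of nodes `x` and `y` share exactly `u` keys. -/
def interCardEvent (n K P : ℕ) (x y u : ℕ) : Set (GonSpace n K P) :=
  {ω | ∃ (hx : x < n) (hy : y < n), ((ω.1 ⟨x, hx⟩).1 ∩ (ω.1 ⟨y, hy⟩).1).card = u}

/-- The event `K_{xy}` that the key rings of nodes `x` and `y` share at least one key. -/
def keyShareEvent (n K P : ℕ) (x y : ℕ) : Set (GonSpace n K P) :=
  {ω | ∃ (hx : x < n) (hy : y < n), ((ω.1 ⟨x, hx⟩).1 ∩ (ω.1 ⟨y, hy⟩).1).Nonempty}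

/-- `r_n = min(⌊P/K⌋, ⌊n/2⌋)`. -/
def rn (n K P : ℕ) : ℕ := min (P / K) (n / 2)

/-- The threshold array `J`. -/
def Jarr (n K P : ℕ) (ε lam mu : ℝ) (i : ℕ) : ℕ :=
  if i ≤ rn n K P then max ⌊(1 + ε) * (K : ℝ)⌋₊ ⌊lam * (K : ℝ) * (i : ℝ)⌋₊
  else ⌊mu * (P : ℝ)⌋₊

/-- The event `𝓔(J)`: some set `T` of at least two nodes has a union of key rings of
size at most `J_{|T|}`. -/
def EJ (n K P : ℕ) (ε lam mu : ℝ) : Set (GonSpace n K P) :=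
  {ω | ∃ T : Finset (Fin n), 2 ≤ T.card ∧
    (T.biUnion fun i => (ω.1 i).1).card ≤ Jarr n K P ε lam mu T.card}

/- Write `p_e = p * p_s` and `#T = t`. A graph which fails to be `k`-connected, or has a vertex of
degree less than `k`, contains a nonempty set `T` of at most half of the vertices with fewer than
`k` outer neighbours, so it suffices to bound the expected number of such `T`.

Given the key rings in `T`, the vertices outside `T` are independent, and each avoids being adjacent
to `T` with probability `𝔼 (1 - p) ^ X`, where `X` is the number of rings in `T` met by a random key
ring. Chernoff's method with weight `θ = 1 / log n` bounds the probability of fewer than `k` outer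
neighbours by `(log n) ^ (k - 1) * (θ + (1 - θ) * 𝔼 (1 - p) ^ X) ^ (n - t)`, whose prefactor is the
`(k - 1) * log log n` in the scaling.

If the rings in `T` were disjoint, negative correlation would give `𝔼 (1 - p) ^ X ≤ exp (-p_e * t)`,
and in general `p_e * t` is reduced by the fraction of repeated keys in `T`. As `P = Ω(n)` and
`K → ∞`, repetitions have small exponential moments. Large sets only need the exponent up to a
constant factor, which holds off an event of vanishing probability: averaging `X` over subsets of
`T` reduces it to sets of size about `1 / p_s`. For `t ≤ n ^ (1 / 8)` the exponent `n * p_e * t` is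
needed up to `O(t)`: if `p` is small, convexity and the case of single vertices suffice, and
otherwise `p_s` is so small that repetitions are negligible. Monotonicity in `p` allows us to assume
that `p_e` is of order `log n / n` throughout. -/

section

open Finset Real
open scoped BigOperators

/-- The probability that a uniformly random `K`-subset of a `P`-set avoids a given `a`-subset. -/
def avoidProb (P K a : ℕ) : ℝ := ((P - a).choose K : ℝ) / P.choose K

section AvoidProb

variable {P K : ℕ}

lemma avoidProb_nonneg (P K a : ℕ) : 0 ≤ avoidProb P K a := by
  unfold avoidProb; positivity

lemma avoidProb_zero (h : K ≤ P) : avoidProb P K 0 = 1 := by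
  have : (P.choose K : ℝ) ≠ 0 := by exact_mod_cast (Nat.choose_pos h).ne'
  simp [avoidProb, this]

lemma avoidProb_one (h : K ≤ P) : avoidProb P K 1 = 1 - (K : ℝ) / P := by
  rcases P with _ | Q
  · obtain rfl : K = 0 := by omega
    simp [avoidProb]
  have hchoose : ((Q + 1).choose K : ℝ) ≠ 0 := by exact_mod_cast (Nat.choose_pos h).ne'
  have hsucc := congrArg (Nat.cast (R := ℝ)) (Nat.choose_mul_succ_eq Q K)
  push_cast [Nat.cast_sub h] at hsucc
  unfold avoidProb
  push_cast
  field_simp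
  linarith

lemma choose_sub_add_mul_choose_le (P K a b : ℕ) :
    (P - (a + b)).choose K * P.choose K ≤ (P - a).choose K * (P - b).choose K := by
  induction K with
  | zero => simp
  | succ K ih =>
    have hfactor : (P - (a + b) - K) * (P - K) ≤ (P - a - K) * (P - b - K) := by
      rcases le_or_gt P (a + b + K) with h | h
      · simp [show P - (a + b) - K = 0 by omega]
      · zify [show a + b ≤ P by omega, show a ≤ P by omega, show b ≤ P by omega,
          show K ≤ P by omega, show K ≤ P - (a + b) by omega, show K ≤ P - a by omega,
          show K ≤ P - b by omega]
        nlinarith [mul_nonneg (Int.natCast_nonneg a) (Int.natCast_nonneg b)]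
    refine Nat.le_of_mul_le_mul_right ?_ (show 0 < (K + 1) * (K + 1) by positivity)
    calc (P - (a + b)).choose (K + 1) * P.choose (K + 1) * ((K + 1) * (K + 1))
        = ((P - (a + b)).choose (K + 1) * (K + 1)) * (P.choose (K + 1) * (K + 1)) := by ring
      _ = ((P - (a + b)).choose K * P.choose K) * ((P - (a + b) - K) * (P - K)) := by
        rw [Nat.choose_succ_right_eq, Nat.choose_succ_right_eq]; ring
      _ ≤ ((P - a).choose K * (P - b).choose K) * ((P - a - K) * (P - b - K)) :=
        Nat.mul_le_mul ih hfactor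
      _ = ((P - a).choose (K + 1) * (K + 1)) * ((P - b).choose (K + 1) * (K + 1)) := by
        rw [Nat.choose_succ_right_eq, Nat.choose_succ_right_eq]; ring
      _ = (P - a).choose (K + 1) * (P - b).choose (K + 1) * ((K + 1) * (K + 1)) := by ring

lemma avoidProb_add_le (h : K ≤ P) (a b : ℕ) :
    avoidProb P K (a + b) ≤ avoidProb P K a * avoidProb P K b := by
  have hchoose : (0 : ℝ) < P.choose K := by exact_mod_cast Nat.choose_pos h
  have hmul : ((P - (a + b)).choose K : ℝ) * P.choose K ≤ (P - a).choose K * (P - b).choose K := by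
    exact_mod_cast choose_sub_add_mul_choose_le P K a b
  unfold avoidProb
  rw [div_mul_div_comm, div_le_div_iff₀ hchoose (by positivity), ← mul_assoc]
  gcongr

lemma avoidProb_le_pow (h : K ≤ P) (a : ℕ) : avoidProb P K a ≤ (1 - (K : ℝ) / P) ^ a := by
  induction a with
  | zero => simp [avoidProb_zero h]
  | succ a ih =>
    rw [pow_succ, ← avoidProb_one h]
    rw [← avoidProb_one h] at ih
    exact (avoidProb_add_le h a 1).trans (by gcongr; exact avoidProb_nonneg _ _ _)

lemma avoidProb_sum_le {ι : Type*} (h : K ≤ P) (J : Finset ι) (a : ι → ℕ) :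
    avoidProb P K (∑ i ∈ J, a i) ≤ ∏ i ∈ J, avoidProb P K (a i) := by
  classical
  induction J using Finset.induction_on with
  | empty => simp [avoidProb_zero h]
  | insert i J hi ih =>
    rw [sum_insert hi, prod_insert hi]
    exact (avoidProb_add_le h _ _).trans (by gcongr; exact avoidProb_nonneg _ _ _)

lemma choose_succ_sub_choose_pred (Q K : ℕ) :
    (Q.choose (K + 1) : ℝ) - (Q - 1).choose (K + 1)
      = if Q = 0 then 0 else ((Q - 1).choose K : ℝ) := by
  rcases Q with _ | Q <;> simp [Nat.choose_succ_succ]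

lemma antitone_avoidProb_sub_succ (P K : ℕ) :
    Antitone fun a => avoidProb P K a - avoidProb P K (a + 1) := by
  refine antitone_nat_of_succ_le fun a => ?_
  simp only [avoidProb, ← sub_div]
  gcongr ?_ / _
  rcases K with _ | K
  · simp
  have hsub : ∀ m, P - (m + 1) = P - m - 1 := by omega
  rw [hsub (a + 1), choose_succ_sub_choose_pred, hsub a, choose_succ_sub_choose_pred]
  split_ifs with h1 h2 h2
  · exact le_rfl
  · positivity
  · omega
  · exact_mod_cast Nat.choose_le_choose K (by omega)

lemma mul_avoidProb_sub_succ_le (h : K ≤ P) (a : ℕ) :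
    a * (avoidProb P K a - avoidProb P K (a + 1)) ≤ 1 - avoidProb P K a :=
  calc a * (avoidProb P K a - avoidProb P K (a + 1))
      = ∑ _i ∈ range a, (avoidProb P K a - avoidProb P K (a + 1)) := by
        rw [sum_const, card_range, nsmul_eq_mul]
    _ ≤ ∑ i ∈ range a, (avoidProb P K i - avoidProb P K (i + 1)) :=
        sum_le_sum fun i hi => antitone_avoidProb_sub_succ P K (mem_range.1 hi).le
    _ = 1 - avoidProb P K a := by rw [sum_range_sub', avoidProb_zero h]

/- The hitting probability `1 - avoidProb P K a` is concave in `a` and vanishes at `0`, so its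
quotient by `a` is nonincreasing. -/
lemma mul_one_sub_avoidProb_le (h : K ≤ P) {a b : ℕ} (hab : a ≤ b) :
    a * (1 - avoidProb P K b) ≤ b * (1 - avoidProb P K a) := by
  induction b, hab using Nat.le_induction with
  | base => exact le_rfl
  | succ b hab ih =>
    rcases Nat.eq_zero_or_pos b with rfl | hb
    · obtain rfl : a = 0 := by omega
      simp [avoidProb_zero h]
    have hb' : (0 : ℝ) < b := by exact_mod_cast hb
    have hstep : b * (1 - avoidProb P K (b + 1)) ≤ (b + 1) * (1 - avoidProb P K b) := by
      linarith [mul_avoidProb_sub_succ_le h b]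
    refine le_of_mul_le_mul_left ?_ hb'
    push_cast
    calc b * (a * (1 - avoidProb P K (b + 1)))
        = a * (b * (1 - avoidProb P K (b + 1))) := by ring
      _ ≤ a * ((b + 1) * (1 - avoidProb P K b)) := by gcongr
      _ = (b + 1) * (a * (1 - avoidProb P K b)) := by ring
      _ ≤ (b + 1) * (b * (1 - avoidProb P K a)) := by gcongr
      _ = b * ((b + 1) * (1 - avoidProb P K a)) := by ring

end AvoidProb

section KeySharing

variable {K P : ℕ}

lemma psf_eq_one_sub_avoidProb (K P : ℕ) : psf K P = 1 - avoidProb P K K := by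
  unfold psf avoidProb
  split_ifs with h
  · rfl
  · simp [Nat.choose_eq_zero_of_lt (show P - K < K by omega)]

lemma psf_le_one (K P : ℕ) : psf K P ≤ 1 := by
  rw [psf_eq_one_sub_avoidProb]
  linarith [avoidProb_nonneg P K K]

lemma psf_nonneg (K P : ℕ) : 0 ≤ psf K P := by
  rw [psf_eq_one_sub_avoidProb, avoidProb, sub_nonneg]
  exact div_le_one_of_le₀ (by exact_mod_cast Nat.choose_le_choose K (P.sub_le K)) (by positivity)

lemma psf_le_sq_div (h : K ≤ P) : psf K P ≤ (K : ℝ) ^ 2 / P := by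
  rcases Nat.eq_zero_or_pos K with rfl | hK
  · simp [psf]
  have hstar := mul_one_sub_avoidProb_le h (Nat.one_le_iff_ne_zero.2 hK.ne')
  rw [avoidProb_one h, ← psf_eq_one_sub_avoidProb] at hstar
  calc psf K P ≤ K * (1 - (1 - (K : ℝ) / P)) := by simpa using hstar
    _ = (K : ℝ) ^ 2 / P := by ring

lemma sq_div_add_sq_le_psf (h : K ≤ P) : (K : ℝ) ^ 2 / (P + (K : ℝ) ^ 2) ≤ psf K P := by
  rcases Nat.eq_zero_or_pos K with rfl | hK
  · simp [psf]
  have hP : (0 : ℝ) < P := by exact_mod_cast hK.trans_le h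
  have hKP : (K : ℝ) / P ≤ 1 := by rw [div_le_one hP]; exact_mod_cast h
  have havoid : avoidProb P K K ≤ P / (P + (K : ℝ) ^ 2) :=
    calc avoidProb P K K ≤ (1 - (K : ℝ) / P) ^ K := avoidProb_le_pow h K
      _ ≤ exp (-((K : ℝ) / P)) ^ K := by
        gcongr
        exact one_sub_le_exp_neg _
      _ = (exp ((K : ℝ) ^ 2 / P))⁻¹ := by
        rw [← exp_nat_mul, ← exp_neg]; congr 1; ring
      _ ≤ ((K : ℝ) ^ 2 / P + 1)⁻¹ := by gcongr; exact add_one_le_exp _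
      _ = P / (P + (K : ℝ) ^ 2) := by field_simp; ring
  rw [psf_eq_one_sub_avoidProb,
    show (K : ℝ) ^ 2 / (P + (K : ℝ) ^ 2) = 1 - P / (P + (K : ℝ) ^ 2) by field_simp; ring]
  linarith

end KeySharing

namespace KeyRing

variable {P K : ℕ}

protected lemma nonempty (h : K ≤ P) : Nonempty (KeyRing P K) := by
  obtain ⟨s, -, hs⟩ := exists_subset_card_eq (s := (univ : Finset (Fin P))) (n := K) (by simpa)
  exact ⟨⟨s, hs⟩⟩

lemma fintypeCard_eq (P K : ℕ) : Fintype.card (KeyRing P K) = P.choose K := by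
  rw [Fintype.card_finset_len, Fintype.card_fin]

lemma card_filter_disjoint (A : Finset (Fin P)) :
    #{x : KeyRing P K | Disjoint A x.1} = (P - #A).choose K := by
  have hcard : #(powersetCard K Aᶜ) = (P - #A).choose K := by
    rw [card_powersetCard, card_compl, Fintype.card_fin]
  rw [← hcard]
  refine card_bij (fun x _ => x.1) (fun x hx => ?_) (fun x _ y _ => Subtype.ext) fun s hs => ?_
  · rw [mem_filter] at hx
    rw [mem_powersetCard, subset_compl_iff_disjoint_left]
    exact ⟨hx.2, x.2⟩
  · rw [mem_powersetCard, subset_compl_iff_disjoint_left] at hs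
    exact ⟨⟨s, hs.2⟩, by simp [hs.1], rfl⟩

lemma card_filter_subset (h : K ≤ P) (A : Finset (Fin P)) :
    #{x : KeyRing P K | A ⊆ x.1} = (P - #A).choose (P - K) := by
  rw [← card_filter_disjoint]
  have hcompl : ∀ {L M} (_ : M = P - L) (x : KeyRing P L), #(x.1ᶜ) = M := fun hM x => by
    rw [card_compl, Fintype.card_fin, x.2, hM]
  refine card_bij (fun x _ => ⟨x.1ᶜ, hcompl rfl x⟩) (fun x hx => ?_)
    (fun x _ y _ hxy => Subtype.ext (compl_injective (Subtype.ext_iff.1 hxy))) fun s hs => ?_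
  · simpa [disjoint_compl_right_iff] using hx
  · exact ⟨⟨s.1ᶜ, hcompl (by omega) s⟩,
      by simpa [subset_compl_iff_disjoint_right] using hs, by simp⟩

lemma expect_disjoint (A : Finset (Fin P)) :
    𝔼 x : KeyRing P K, (if Disjoint A x.1 then (1 : ℝ) else 0) = avoidProb P K #A := by
  rw [Fintype.expect_eq_sum_div_card, sum_boole, card_filter_disjoint, fintypeCard_eq, avoidProb]

lemma expect_subset_le (h : K ≤ P) (A : Finset (Fin P)) :
    𝔼 x : KeyRing P K, (if A ⊆ x.1 then (1 : ℝ) else 0) ≤ ((K : ℝ) / P) ^ #A := by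
  rcases P.eq_zero_or_pos with rfl | hP
  · obtain rfl : K = 0 := by omega
    simp [eq_empty_of_isEmpty A]
  have hcompl : 1 - ((P - K : ℕ) : ℝ) / P = (K : ℝ) / P := by
    rw [Nat.cast_sub h]
    field_simp
    ring
  rw [Fintype.expect_eq_sum_div_card, sum_boole, card_filter_subset h, fintypeCard_eq,
    ← Nat.choose_symm h, ← hcompl]
  exact avoidProb_le_pow (Nat.sub_le P K) #A

lemma exp_mul_card_inter (x : KeyRing P K) (U : Finset (Fin P)) (s : ℝ) :
    exp (s * #(x.1 ∩ U))
      = ∑ A ∈ U.powerset, (exp s - 1) ^ #A * (if A ⊆ x.1 then (1 : ℝ) else 0) := by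
  have hprod : exp (s * #(x.1 ∩ U)) = ∏ _y ∈ x.1 ∩ U, ((exp s - 1) + 1) := by
    rw [prod_const, mul_comm, exp_nat_mul, sub_add_cancel]
  simp only [hprod, prod_add, prod_const, one_pow, mul_one, mul_ite, mul_zero, ← sum_filter]
  refine sum_congr ?_ fun _ _ => rfl
  ext A
  simp only [mem_powerset, mem_filter, subset_inter_iff, and_comm]

/- A key ring contains a set no more often than independent draws of probability `K / P` would, so
its overlap with `U` is dominated by a binomial variable. -/
lemma expect_exp_mul_card_inter_le (h : K ≤ P) (U : Finset (Fin P)) {s : ℝ} (hs : 0 ≤ s) :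
    𝔼 x : KeyRing P K, exp (s * #(x.1 ∩ U)) ≤ exp (exp s * ((K : ℝ) / P) * #U) := by
  have hexp : 0 ≤ exp s - 1 := by linarith [one_le_exp hs]
  calc 𝔼 x : KeyRing P K, exp (s * #(x.1 ∩ U))
      = ∑ A ∈ U.powerset, (exp s - 1) ^ #A *
          𝔼 x : KeyRing P K, (if A ⊆ x.1 then (1 : ℝ) else 0) := by
        simp_rw [exp_mul_card_inter, expect_sum_comm, mul_expect]
    _ ≤ ∑ A ∈ U.powerset, ((exp s - 1) * ((K : ℝ) / P)) ^ #A := by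
        gcongr with A
        rw [mul_pow]
        gcongr
        exact expect_subset_le h A
    _ = ((exp s - 1) * ((K : ℝ) / P) + 1) ^ #U := by
        rw [← prod_const, prod_add]
        simp
    _ ≤ exp ((exp s - 1) * ((K : ℝ) / P)) ^ #U := by gcongr; exact add_one_le_exp _
    _ = exp ((exp s - 1) * ((K : ℝ) / P) * #U) := by rw [← exp_nat_mul, mul_comm]
    _ ≤ exp (exp s * ((K : ℝ) / P) * #U) := by gcongr; linarith

end KeyRing

lemma exists_pairwiseDisjoint_biUnion_eq {ι α : Type*} [DecidableEq α]
    (A : ι → Finset α) (T : Finset ι) :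
    ∃ B : ι → Finset α, (∀ i, B i ⊆ A i) ∧ (T : Set ι).PairwiseDisjoint B ∧
      T.biUnion B = T.biUnion A := by
  classical
  induction T using Finset.induction_on with
  | empty => exact ⟨A, fun _ => subset_rfl, by simp, rfl⟩
  | insert i T hi ih =>
    obtain ⟨B, hBA, hdisj, hunion⟩ := ih
    set B' := Function.update B i (A i \ T.biUnion A) with hB'
    have hB'i : B' i = A i \ T.biUnion A := Function.update_self ..
    have hB'T : ∀ j ∈ T, B' j = B j := fun j hj =>
      Function.update_of_ne (ne_of_mem_of_not_mem hj hi) ..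
    refine ⟨B', fun j => ?_, ?_, ?_⟩
    · rcases eq_or_ne j i with rfl | hj
      · exact hB'i ▸ sdiff_subset
      · exact hB' ▸ Function.update_of_ne hj .. ▸ hBA j
    · rw [coe_insert, Set.pairwiseDisjoint_insert_of_notMem (by simpa using hi)]
      refine ⟨fun j hj k hk hjk => ?_, fun j hj => ?_⟩
      · rw [Function.onFun, hB'T j hj, hB'T k hk]
        exact hdisj hj hk hjk
      · rw [hB'i, hB'T j hj]
        exact disjoint_sdiff_self_left.mono_right
          ((hBA j).trans (subset_biUnion_of_mem A hj))
    · rw [biUnion_insert, biUnion_insert, hB'i, biUnion_congr rfl hB'T, hunion,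
        sdiff_union_self_eq_union]

lemma exp_expect_le {ι : Type*} {s : Finset ι} (hs : s.Nonempty) (f : ι → ℝ) :
    exp (𝔼 i ∈ s, f i) ≤ 𝔼 i ∈ s, exp (f i) := by
  have hcard : (#s : ℝ) ≠ 0 := by exact_mod_cast hs.card_ne_zero
  have hjensen := convexOn_exp.map_sum_le (t := s) (w := fun _ => (#s : ℝ)⁻¹) (p := f)
    (fun _ _ => by positivity) (by rw [sum_const, nsmul_eq_mul, mul_inv_cancel₀ hcard])
    (fun _ _ => Set.mem_univ _)
  simpa only [smul_eq_mul, ← mul_sum, expect_eq_sum_div_card, div_eq_inv_mul] using hjensen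

lemma expect_powersetCard_sum {ι : Type*} {b : ℕ} {T : Finset ι} (hbT : b ≤ #T) (f : ι → ℝ) :
    𝔼 W ∈ powersetCard b T, ∑ i ∈ W, f i = b / #T * ∑ i ∈ T, f i := by
  classical
  rcases b with _ | b
  · simp
  have hcount : ∀ i ∈ T, #{W ∈ powersetCard (b + 1) T | i ∈ W} = (#T - 1).choose b := fun i hi => by
    simpa [hi] using card_filter_powersetCard_subset {i} T (b + 1)
  have hdouble : ∑ W ∈ powersetCard (b + 1) T, ∑ i ∈ W, f i
      = (#T - 1).choose b * ∑ i ∈ T, f i := by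
    rw [sum_comm' (t' := T) (s' := fun i => {W ∈ powersetCard (b + 1) T | i ∈ W}), mul_sum]
    · exact sum_congr rfl fun i hi => by rw [sum_const, hcount i hi, nsmul_eq_mul]
    · intro W i
      simp only [mem_filter, mem_powersetCard]
      exact ⟨fun h => ⟨h, h.1.1 h.2⟩, fun h => h.1⟩
  obtain ⟨t, ht⟩ : ∃ t, #T = t + 1 := ⟨#T - 1, by omega⟩
  have hchoose : (((t + 1).choose (b + 1) : ℕ) : ℝ) ≠ 0 := by
    exact_mod_cast (Nat.choose_pos (ht ▸ hbT)).ne'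
  have habsorb : ((t : ℝ) + 1) * t.choose b = (t + 1).choose (b + 1) * (b + 1) := by
    exact_mod_cast Nat.add_one_mul_choose_eq t b
  rw [expect_eq_sum_div_card, hdouble, card_powersetCard, ht, Nat.add_sub_cancel]
  push_cast
  field_simp
  linear_combination (∑ i ∈ T, f i) * habsorb

section ShareCount

variable {ι : Type*} {P K : ℕ}

/-- The set of keys held by at least one member of `T`. -/
def keyUnion (S : ι → KeyRing P K) (T : Finset ι) : Finset (Fin P) := T.biUnion fun i => (S i).1

/-- The number of members of `T` sharing a key with the key ring `x`. -/
def shareCount (S : ι → KeyRing P K) (T : Finset ι) (x : KeyRing P K) : ℕ :=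
  #{i ∈ T | ((S i).1 ∩ x.1).Nonempty}

lemma card_keyUnion_le (S : ι → KeyRing P K) (T : Finset ι) : #(keyUnion S T) ≤ #T * K :=
  card_biUnion_le_card_mul _ _ _ fun i _ => (S i).2.le

lemma cast_shareCount (S : ι → KeyRing P K) (T : Finset ι) (x : KeyRing P K) :
    (shareCount S T x : ℝ) = ∑ i ∈ T, if ((S i).1 ∩ x.1).Nonempty then (1 : ℝ) else 0 := by
  rw [shareCount, sum_boole]

lemma pow_shareCount_le_prod {S : ι → KeyRing P K} {B : ι → Finset (Fin P)}
    (hBS : ∀ i, B i ⊆ (S i).1) (T : Finset ι) {q : ℝ} (hq0 : 0 ≤ q) (hq1 : q ≤ 1)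
    (x : KeyRing P K) :
    q ^ shareCount S T x ≤ ∏ i ∈ T, ((1 - q) * (if Disjoint (B i) x.1 then 1 else 0) + q) := by
  rw [shareCount, ← prod_const, prod_filter]
  refine prod_le_prod (fun i _ => by split_ifs <;> linarith) fun i _ => ?_
  by_cases hdisj : Disjoint (B i) x.1
  · rw [if_pos hdisj]
    split_ifs <;> linarith
  · have hmeet : ((S i).1 ∩ x.1).Nonempty :=
      (not_disjoint_iff_nonempty_inter.1 hdisj).mono (inter_subset_inter_right (hBS i))
    rw [if_neg hdisj, if_pos hmeet]
    linarith

lemma expect_prod_disjoint_le (h : K ≤ P) {B : ι → Finset (Fin P)} {T : Finset ι}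
    (hB : (T : Set ι).PairwiseDisjoint B) {q : ℝ} (hq0 : 0 ≤ q) (hq1 : q ≤ 1) :
    𝔼 x : KeyRing P K, ∏ i ∈ T, ((1 - q) * (if Disjoint (B i) x.1 then 1 else 0) + q)
      ≤ ∏ i ∈ T, ((1 - q) * avoidProb P K #(B i) + q) := by
  classical
  have := sub_nonneg.2 hq1
  calc 𝔼 x : KeyRing P K, ∏ i ∈ T, ((1 - q) * (if Disjoint (B i) x.1 then 1 else 0) + q)
      = ∑ J ∈ T.powerset, (1 - q) ^ #J * q ^ #(T \ J) *
          𝔼 x : KeyRing P K, (if Disjoint (J.biUnion B) x.1 then (1 : ℝ) else 0) := by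
        simp only [prod_add, prod_mul_distrib, prod_const, prod_ite_zero, one_pow,
          disjoint_biUnion_left, expect_sum_comm, mul_expect]
        refine sum_congr rfl fun J _ => expect_congr rfl fun x _ => by ring
    _ ≤ ∑ J ∈ T.powerset, (1 - q) ^ #J * q ^ #(T \ J) * ∏ i ∈ J, avoidProb P K #(B i) := by
        gcongr with J hJ
        rw [KeyRing.expect_disjoint,
          card_biUnion fun i hi j hj => hB (mem_powerset.1 hJ hi) (mem_powerset.1 hJ hj)]
        exact avoidProb_sum_le h J _
    _ = ∏ i ∈ T, ((1 - q) * avoidProb P K #(B i) + q) := by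
        simp only [prod_add, prod_mul_distrib, prod_const]
        exact sum_congr rfl fun J _ => by ring

lemma psf_mul_div_le_one_sub_avoidProb (h : K ≤ P) {a : ℕ} (ha : a ≤ K) :
    psf K P * a / K ≤ 1 - avoidProb P K a := by
  have hstar := mul_one_sub_avoidProb_le h ha
  rw [← psf_eq_one_sub_avoidProb] at hstar
  have hmono : avoidProb P K a ≤ 1 :=
    (avoidProb_le_pow h a).trans (pow_le_one₀
      (sub_nonneg.2 (div_le_one_of_le₀ (by exact_mod_cast h) (by positivity)))
      (by linarith [show 0 ≤ (K : ℝ) / P by positivity]))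
  exact div_le_of_le_mul₀ (by positivity) (by linarith) (by linarith)

/- Assigning each key of `keyUnion S T` to a single vertex makes the rings disjoint, so the events
of avoiding them are negatively correlated. -/
lemma expect_pow_shareCount_le (h : K ≤ P) (S : ι → KeyRing P K) (T : Finset ι) {q : ℝ}
    (hq0 : 0 ≤ q) (hq1 : q ≤ 1) :
    𝔼 x, q ^ shareCount S T x ≤ exp (-((1 - q) * psf K P * #(keyUnion S T) / K)) := by
  classical
  obtain ⟨B, hBS, hdisj, hunion⟩ := exists_pairwiseDisjoint_biUnion_eq (fun i => (S i).1) T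
  have hq1' : 0 ≤ 1 - q := sub_nonneg.2 hq1
  calc 𝔼 x, q ^ shareCount S T x
      ≤ 𝔼 x : KeyRing P K, ∏ i ∈ T, ((1 - q) * (if Disjoint (B i) x.1 then 1 else 0) + q) :=
        expect_le_expect fun x _ => pow_shareCount_le_prod hBS T hq0 hq1 x
    _ ≤ ∏ i ∈ T, ((1 - q) * avoidProb P K #(B i) + q) := expect_prod_disjoint_le h hdisj hq0 hq1
    _ ≤ ∏ i ∈ T, exp (-((1 - q) * (psf K P * #(B i) / K))) := by
        gcongr with i
        · exact fun i _ => add_nonneg (mul_nonneg hq1' (avoidProb_nonneg _ _ _)) hq0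
        · have hBi : #(B i) ≤ K := (card_le_card (hBS i)).trans (S i).2.le
          have hfactor := mul_le_mul_of_nonneg_left (psf_mul_div_le_one_sub_avoidProb h hBi) hq1'
          linarith [one_sub_le_exp_neg ((1 - q) * (psf K P * #(B i) / K))]
    _ = exp (-((1 - q) * psf K P * #(keyUnion S T) / K)) := by
        rw [← exp_sum, keyUnion, ← hunion, card_biUnion hdisj, sum_neg_distrib, Nat.cast_sum,
          mul_sum, sum_div]
        exact congrArg _ (congrArg _ (sum_congr rfl fun i _ => by ring))

/- Jensen's inequality: `shareCount S T x / #T` is the average of `shareCount S W x / b` over the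
`b`-subsets `W` of `T`. -/
lemma expect_exp_neg_mul_shareCount_le (S : ι → KeyRing P K) {b : ℕ} (hb : 0 < b) {T : Finset ι}
    (hbT : b ≤ #T) {s M : ℝ}
    (hM : ∀ W ⊆ T, #W = b → 𝔼 x, exp (-(s * #T / b * shareCount S W x)) ≤ M) :
    𝔼 x, exp (-(s * shareCount S T x)) ≤ M := by
  classical
  have hb' : (b : ℝ) ≠ 0 := by exact_mod_cast hb.ne'
  have hT' : (#T : ℝ) ≠ 0 := by exact_mod_cast (hb.trans_le hbT).ne'
  have hne : (powersetCard b T).Nonempty := powersetCard_nonempty.2 hbT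
  have hmean : ∀ x, -(s * shareCount S T x)
      = 𝔼 W ∈ powersetCard b T, -(s * #T / b * shareCount S W x) := fun x => by
    simp_rw [expect_neg_distrib, ← mul_expect, cast_shareCount, expect_powersetCard_sum hbT]
    field_simp
  calc 𝔼 x, exp (-(s * shareCount S T x))
      ≤ 𝔼 x, 𝔼 W ∈ powersetCard b T, exp (-(s * #T / b * shareCount S W x)) :=
        expect_le_expect fun x _ => by rw [hmean]; exact exp_expect_le hne _
    _ = 𝔼 W ∈ powersetCard b T, 𝔼 x, exp (-(s * #T / b * shareCount S W x)) := expect_comm ..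
    _ ≤ M := expect_le hne fun W hW =>
        hM W (mem_powersetCard.1 hW).1 (mem_powersetCard.1 hW).2

end ShareCount

section Resampling

variable {ι α : Type*} [Fintype ι] [DecidableEq ι] [Fintype α]

lemma expect_expect_update [Nonempty α] (v : ι) (H : (ι → α) → ℝ) :
    𝔼 S, 𝔼 x, H (Function.update S v x) = 𝔼 S, H S := by
  have hsplit : ∀ G : (ι → α) → ℝ, 𝔼 S, G S = 𝔼 y, G ((Equiv.funSplitAt v α).symm y) :=
    fun G => Fintype.expect_equiv (Equiv.funSplitAt v α) _ _ fun S => by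
      rw [Equiv.symm_apply_apply]
  have hupdate : ∀ (a x : α) (r : {j // j ≠ v} → α),
      Function.update ((Equiv.funSplitAt v α).symm (a, r)) v x
        = (Equiv.funSplitAt v α).symm (x, r) := fun a x r => by
    funext j
    rcases eq_or_ne j v with rfl | hj <;> simp [Equiv.funSplitAt, Equiv.piSplitAt, *]
  simp only [hsplit, ← univ_product_univ, expect_product, hupdate]
  rw [expect_const univ_nonempty, expect_comm]

/- Fubini: conditionally on the coordinates outside `R`, those in `R` are independent. -/
lemma expect_mul_prod [Nonempty α] (R : Finset ι) (F : (ι → α) → ℝ) (f : (ι → α) → α → ℝ)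
    (hF : ∀ v ∈ R, ∀ S x, F (Function.update S v x) = F S)
    (hf : ∀ v ∈ R, ∀ S x, f (Function.update S v x) = f S) :
    𝔼 S, F S * ∏ v ∈ R, f S (S v) = 𝔼 S, F S * (𝔼 x, f S x) ^ #R := by
  induction R using Finset.induction_on generalizing F with
  | empty => simp
  | insert v R hv ih =>
    rw [forall_mem_insert] at hF hf
    have hresample : ∀ S, 𝔼 x, F (Function.update S v x) *
          ∏ w ∈ insert v R, f (Function.update S v x) (Function.update S v x w)
        = F S * (𝔼 x, f S x) * ∏ w ∈ R, f S (S w) := fun S => by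
      rw [mul_right_comm, mul_expect]
      refine expect_congr rfl fun x _ => ?_
      have hrest : ∏ w ∈ R, f S (Function.update S v x w) = ∏ w ∈ R, f S (S w) :=
        prod_congr rfl fun w hw => by rw [Function.update_of_ne (ne_of_mem_of_not_mem hw hv)]
      rw [prod_insert hv, hF.1, hf.1, Function.update_self, hrest]
      ring
    rw [← expect_expect_update v]
    simp_rw [hresample]
    rw [ih (fun S => F S * 𝔼 x, f S x)
      (fun w hw S x => by simp only [hF.2 w hw, hf.2 w hw]) hf.2]
    simp only [card_insert_of_notMem hv, pow_succ', mul_assoc]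

end Resampling

section Repetitions

variable {ι : Type*} {P K : ℕ}

lemma keyUnion_update_of_notMem [DecidableEq ι] (S : ι → KeyRing P K) {T : Finset ι} {v : ι}
    (hv : v ∉ T) (x : KeyRing P K) : keyUnion (Function.update S v x) T = keyUnion S T :=
  biUnion_congr rfl fun i hi => by rw [Function.update_of_ne (ne_of_mem_of_not_mem hi hv)]

lemma shareCount_update_of_notMem [DecidableEq ι] (S : ι → KeyRing P K) {T : Finset ι} {v : ι}
    (hv : v ∉ T) (x : KeyRing P K) :
    shareCount (Function.update S v x) T = shareCount S T := by
  funext y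
  exact congrArg card (filter_congr fun i hi => by
    rw [Function.update_of_ne (ne_of_mem_of_not_mem hi hv)])

/-- The number of keys lost to overlaps: the total size of the rings of `T`, counted with
multiplicity, minus the size of their union. -/
def repetitions (S : ι → KeyRing P K) (T : Finset ι) : ℝ := K * #T - #(keyUnion S T)

lemma repetitions_insert_update [DecidableEq ι] (S : ι → KeyRing P K) {T : Finset ι} {v : ι}
    (hv : v ∉ T) (x : KeyRing P K) :
    repetitions (Function.update S v x) (insert v T)
      = repetitions S T + #(x.1 ∩ keyUnion S T) := by
  have hunion : keyUnion (Function.update S v x) (insert v T) = x.1 ∪ keyUnion S T := by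
    rw [← keyUnion_update_of_notMem S hv x, keyUnion, biUnion_insert, Function.update_self,
      keyUnion]
  have hcard : (#(x.1 ∪ keyUnion S T) : ℝ) + #(x.1 ∩ keyUnion S T) = K + #(keyUnion S T) := by
    have := card_union_add_card_inter x.1 (keyUnion S T)
    rw [x.2] at this
    exact_mod_cast this
  rw [repetitions, repetitions, hunion, card_insert_of_notMem hv, Nat.cast_succ]
  linarith

lemma expect_exp_mul_repetitions_le [Fintype ι] [DecidableEq ι] (h : K ≤ P) {s : ℝ}
    (hs : 0 ≤ s) (T : Finset ι) :
    𝔼 S : ι → KeyRing P K, exp (s * repetitions S T)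
      ≤ exp ((#T : ℝ) ^ 2 * ((K : ℝ) ^ 2 / P) * exp s) := by
  have := KeyRing.nonempty h
  induction T using Finset.induction_on with
  | empty => simp [repetitions, keyUnion]
  | insert v T hv ih =>
    have hoverlap : ∀ S : ι → KeyRing P K, 𝔼 x : KeyRing P K, exp (s * #(x.1 ∩ keyUnion S T))
        ≤ exp (exp s * ((K : ℝ) ^ 2 / P) * #T) := fun S => by
      have hcard : (#(keyUnion S T) : ℝ) ≤ #T * K := by exact_mod_cast card_keyUnion_le S T
      calc 𝔼 x : KeyRing P K, exp (s * #(x.1 ∩ keyUnion S T))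
          ≤ exp (exp s * ((K : ℝ) / P) * #(keyUnion S T)) :=
            KeyRing.expect_exp_mul_card_inter_le h _ hs
        _ ≤ exp (exp s * ((K : ℝ) / P) * (#T * K)) := by gcongr
        _ = exp (exp s * ((K : ℝ) ^ 2 / P) * #T) := by ring_nf
    calc 𝔼 S : ι → KeyRing P K, exp (s * repetitions S (insert v T))
        = 𝔼 S : ι → KeyRing P K, exp (s * repetitions S T) *
            𝔼 x : KeyRing P K, exp (s * #(x.1 ∩ keyUnion S T)) := by
          rw [← expect_expect_update v]
          simp_rw [repetitions_insert_update _ hv, mul_add, exp_add, mul_expect]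
      _ ≤ 𝔼 S : ι → KeyRing P K, exp (s * repetitions S T) *
            exp (exp s * ((K : ℝ) ^ 2 / P) * #T) := by
          gcongr with S
          exact hoverlap S
      _ ≤ exp ((#T : ℝ) ^ 2 * ((K : ℝ) ^ 2 / P) * exp s) *
            exp (exp s * ((K : ℝ) ^ 2 / P) * #T) := by
          rw [← expect_mul]
          gcongr
      _ = exp (((#T : ℝ) ^ 2 + #T) * ((K : ℝ) ^ 2 / P) * exp s) := by
          rw [← exp_add]
          ring_nf
      _ ≤ exp ((#(insert v T) : ℝ) ^ 2 * ((K : ℝ) ^ 2 / P) * exp s) := by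
          gcongr
          rw [card_insert_of_notMem hv, Nat.cast_succ]
          linarith [sq_nonneg (#T : ℝ), (#T).cast_nonneg (α := ℝ)]

end Repetitions

section UnionBound

lemma choose_le_exp_mul_one_add_log_sub_log {n w : ℕ} (hn : 0 < n) (hw : 0 < w) :
    (n.choose w : ℝ) ≤ exp (w * (1 + log n - log w)) := by
  have hn' : (0 : ℝ) < n := by exact_mod_cast hn
  have hw' : (0 : ℝ) < w := by exact_mod_cast hw
  have : (0 : ℝ) < w.factorial := by exact_mod_cast w.factorial_pos
  have hpow := pow_div_factorial_le_exp (w : ℝ) hw'.le w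
  calc (n.choose w : ℝ) ≤ (n : ℝ) ^ w / w.factorial := Nat.choose_le_pow_div w n
    _ = (n : ℝ) ^ w * ((w : ℝ) ^ w / w.factorial) / (w : ℝ) ^ w := by field_simp
    _ ≤ (n : ℝ) ^ w * exp w / (w : ℝ) ^ w := by gcongr
    _ = exp (w * (1 + log n - log w)) := by
      rw [show (w : ℝ) * (1 + log n - log w) = w * log n + w - w * log w by ring, exp_sub, exp_add,
        exp_nat_mul, exp_nat_mul, exp_log hn', exp_log hw']

lemma choose_mul_exp_neg_le {n w : ℕ} (hn : 0 < n) (hw : 0 < w) {A x : ℝ}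
    (hx : A + w * (2 + log n - log w) ≤ x) :
    n.choose w * exp (-x) ≤ exp (-A) * (1 / 2) ^ w := by
  have hhalf : exp (-1) ≤ (1 / 2 : ℝ) := by
    rw [exp_neg, ← one_div]
    exact one_div_le_one_div_of_le two_pos (by linarith [add_one_le_exp (1 : ℝ)])
  calc n.choose w * exp (-x) ≤ exp (w * (1 + log n - log w)) * exp (-x) := by
        gcongr
        exact choose_le_exp_mul_one_add_log_sub_log hn hw
    _ ≤ exp (-A + w * (-1)) := by
        rw [← exp_add]
        exact exp_le_exp.2 (by linarith)
    _ = exp (-A) * exp (-1) ^ w := by rw [exp_add, exp_nat_mul]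
    _ ≤ exp (-A) * (1 / 2) ^ w := by gcongr

lemma sum_le_of_choose_mul_le {V : Type*} [Fintype V] (I : Finset (Finset V))
    (hI : ∀ T ∈ I, T.Nonempty) {g : Finset V → ℝ} {ε : ℝ} (hε : 0 ≤ ε)
    (hg : ∀ T ∈ I, (Fintype.card V).choose #T * g T ≤ ε * (1 / 2) ^ #T) :
    ∑ T ∈ I, g T ≤ ε := by
  classical
  set n := Fintype.card V
  let bound : ℕ → ℝ := fun t => if t = 0 then 0 else ε * (1 / 2) ^ t / n.choose t
  have hbound : ∀ t, 0 ≤ bound t := fun t => by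
    simp only [bound]
    split_ifs <;> positivity
  calc ∑ T ∈ I, g T ≤ ∑ T ∈ I, bound #T := by
        gcongr with T hT
        have hchoose : (0 : ℝ) < n.choose #T := by
          exact_mod_cast Nat.choose_pos (card_le_univ T)
        simp only [bound, (hI T hT).card_ne_zero, if_false]
        rw [le_div_iff₀ hchoose, mul_comm]
        exact hg T hT
    _ ≤ ∑ T ∈ (univ : Finset V).powerset, bound #T :=
        sum_le_sum_of_subset_of_nonneg (by simp) fun T _ _ => hbound _
    _ = ∑ t ∈ range (n + 1), n.choose t • bound t := sum_powerset_apply_card _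
    _ = ∑ t ∈ range n, ε * ((1 / 2) * (1 / 2) ^ t) := by
        rw [sum_range_succ']
        simp only [bound, if_true, smul_zero, add_zero]
        refine sum_congr rfl fun t ht => ?_
        have hchoose : (n.choose (t + 1) : ℝ) ≠ 0 := by
          exact_mod_cast (Nat.choose_pos (mem_range.1 ht)).ne'
        simp only [Nat.succ_ne_zero, if_false, nsmul_eq_mul]
        field_simp
        ring
    _ = ε * ((1 / 2) * ∑ t ∈ range n, (1 / 2) ^ t) := by rw [mul_sum, mul_sum]
    _ ≤ ε * ((1 / 2) * 2) := by gcongr; exact sum_geometric_two_le n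
    _ = ε := by ring

end UnionBound

section FewRepetitions

variable {ι : Type*} {P K : ℕ}

/-- In every subfamily of `T` with at most `b` members, at most one key in `64` is a repetition. -/
def FewRepetitions (b : ℕ) (S : ι → KeyRing P K) (T : Finset ι) : Prop :=
  ∀ W ⊆ T, #W ≤ b → repetitions S W ≤ K * #W / 64

lemma FewRepetitions.mono {b : ℕ} {S : ι → KeyRing P K} {T U : Finset ι} (hTU : T ⊆ U)
    (hU : FewRepetitions b S U) : FewRepetitions b S T := fun W hW => hU W (hW.trans hTU)

variable [Fintype ι] [DecidableEq ι]

lemma expect_indicator_lt_repetitions_le (h : K ≤ P) (hK : 0 < K) {W : Finset ι}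
    (hW : W.Nonempty) (hWP : #W * K ≤ P) (a : ℝ) :
    𝔼 S : ι → KeyRing P K, {S | a < repetitions S W}.indicator 1 S
      ≤ exp (#W * K - a * log (P / (#W * K))) := by
  have : (0 : ℝ) < #W := by exact_mod_cast hW.card_pos
  have : (0 : ℝ) < K := by exact_mod_cast hK
  have hP : (0 : ℝ) < P := by exact_mod_cast hK.trans_le h
  set s := log (P / (#W * K))
  have hs : 0 ≤ s := by
    refine log_nonneg ((one_le_div (by positivity)).2 ?_)
    exact_mod_cast hWP
  have hmarkov : ∀ S : ι → KeyRing P K, {S | a < repetitions S W}.indicator 1 S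
      ≤ exp (-(a * s)) * exp (s * repetitions S W) := fun S => by
    rw [← exp_add]
    refine Set.indicator_apply_le' (fun hS => one_le_exp ?_) fun _ => (exp_pos _).le
    nlinarith [mul_le_mul_of_nonneg_right (Set.mem_ofPred.1 hS).le hs]
  calc 𝔼 S : ι → KeyRing P K, {S | a < repetitions S W}.indicator 1 S
      ≤ exp (-(a * s)) * 𝔼 S : ι → KeyRing P K, exp (s * repetitions S W) := by
        rw [mul_expect]
        exact expect_le_expect fun S _ => hmarkov S
    _ ≤ exp (-(a * s)) * exp ((#W : ℝ) ^ 2 * ((K : ℝ) ^ 2 / P) * exp s) := by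
        gcongr
        exact expect_exp_mul_repetitions_le h hs W
    _ = exp (#W * K - a * s) := by
        rw [← exp_add, show exp s = P / (#W * K) from exp_log (by positivity)]
        congr 1
        field_simp
        ring

lemma choose_mul_expect_indicator_lt_repetitions_le (h : K ≤ P) (hK : 256 ≤ K) {c A : ℝ}
    (hc : 0 < c) (hcP : c * Fintype.card ι ≤ P) {W : Finset ι} (hW : W.Nonempty)
    (hWP : #W * K * exp 128 ≤ P) (hA : 0 ≤ A) (hAK : A + 2 ≤ K / 2 - log K + log c) :
    (Fintype.card ι).choose #W *
        𝔼 S : ι → KeyRing P K, {S | K * #W / 64 < repetitions S W}.indicator 1 S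
      ≤ exp (-A) * (1 / 2) ^ #W := by
  have hn : 0 < Fintype.card ι := hW.card_pos.trans_le (card_le_univ W)
  have hn' : (0 : ℝ) < Fintype.card ι := by exact_mod_cast hn
  have hw : (0 : ℝ) < #W := by exact_mod_cast hW.card_pos
  have hK' : (256 : ℝ) ≤ K := by exact_mod_cast hK
  have hP : (0 : ℝ) < P := (by positivity : (0 : ℝ) < #W * K * exp 128).trans_le hWP
  have hWP' : #W * K ≤ P := by
    have : (#W : ℝ) * K ≤ P := (le_mul_of_one_le_right (by positivity)
      (one_le_exp (by norm_num))).trans hWP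
    exact_mod_cast this
  have hlogP : log c + log (Fintype.card ι) ≤ log P := by
    rw [← log_mul hc.ne' hn'.ne']
    exact log_le_log (by positivity) hcP
  set s := log (P / (#W * K)) with hs
  have hs128 : 128 ≤ s := by
    rw [hs, le_log_iff_exp_le (by positivity), le_div_iff₀ (by positivity)]
    linarith
  have hs_eq : s = log P - (log #W + log K) := by
    rw [hs, log_div hP.ne' (by positivity), log_mul hw.ne' (by positivity)]
  have hexponent : A + (2 + log (Fintype.card ι) - log #W) ≤ s * (K / 64) - K := by
    nlinarith [mul_nonneg (sub_nonneg.2 hs128) (sub_nonneg.2 hK')]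
  have hAW : A ≤ #W * A := le_mul_of_one_le_left hA (by exact_mod_cast hW.card_pos)
  calc (Fintype.card ι).choose #W *
        𝔼 S : ι → KeyRing P K, {S | K * #W / 64 < repetitions S W}.indicator 1 S
      ≤ (Fintype.card ι).choose #W * exp (-(K * #W / 64 * s - #W * K)) := by
        rw [neg_sub]
        gcongr
        exact expect_indicator_lt_repetitions_le h (by omega) hW hWP' _
    _ ≤ exp (-A) * (1 / 2) ^ #W :=
        choose_mul_exp_neg_le hn hW.card_pos
          (by linarith [mul_le_mul_of_nonneg_left hexponent hw.le])

lemma expect_indicator_not_fewRepetitions_le (h : K ≤ P) (hK : 256 ≤ K) {b : ℕ} {c A : ℝ}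
    (hc : 0 < c) (hcP : c * Fintype.card ι ≤ P) (hb : b * K * exp 128 ≤ P) (hA : 0 ≤ A)
    (hAK : A + 2 ≤ K / 2 - log K + log c) :
    𝔼 S : ι → KeyRing P K, {S | ¬ FewRepetitions b S univ}.indicator 1 S
      ≤ exp (-A) := by
  have hunion : ∀ S : ι → KeyRing P K,
      ({S | ¬ FewRepetitions b S univ}.indicator 1 S : ℝ)
        ≤ ∑ W with W.Nonempty ∧ #W ≤ b,
        {S | K * #W / 64 < repetitions S W}.indicator 1 S := fun S => by
    have hnonneg : ∀ W : Finset ι,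
        (0 : ℝ) ≤ {S : ι → KeyRing P K | K * #W / 64 < repetitions S W}.indicator 1 S :=
      fun W => Set.indicator_nonneg (fun _ _ => zero_le_one) S
    refine Set.indicator_apply_le' (fun hS => ?_) fun _ => sum_nonneg fun W _ => hnonneg W
    simp only [FewRepetitions, Set.mem_ofPred, not_forall, not_le] at hS
    obtain ⟨W, -, hWb, hW⟩ := hS
    have hWne : W.Nonempty := by
      rw [nonempty_iff_ne_empty]
      rintro rfl
      simp [repetitions, keyUnion] at hW
    refine le_trans (le_of_eq ?_) (single_le_sum (fun W _ => hnonneg W)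
      (mem_filter.2 ⟨mem_univ W, hWne, hWb⟩))
    simp [Set.indicator, hW]
  calc 𝔼 S : ι → KeyRing P K, {S | ¬ FewRepetitions b S univ}.indicator 1 S
      ≤ ∑ W with W.Nonempty ∧ #W ≤ b,
          𝔼 S : ι → KeyRing P K, {S | K * #W / 64 < repetitions S W}.indicator 1 S := by
        rw [← expect_sum_comm]
        exact expect_le_expect fun S _ => hunion S
    _ ≤ exp (-A) := by
        refine sum_le_of_choose_mul_le _ (fun W hW => (mem_filter.1 hW).2.1) (exp_pos _).le
          fun W hW => ?_
        obtain ⟨-, hWne, hWb⟩ := mem_filter.1 hW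
        have hWP : #W * K * exp 128 ≤ P := le_trans (by gcongr) hb
        exact choose_mul_expect_indicator_lt_repetitions_le h hK hc hcP hWne hWP hA hAK

end FewRepetitions

section CollisionExponent

lemma div_one_add_le_one_sub_exp_neg {z : ℝ} (hz : 0 ≤ z) : z / (1 + z) ≤ 1 - exp (-z) := by
  have : 0 < 1 + z := by linarith
  calc z / (1 + z) = 1 - (1 + z)⁻¹ := by field_simp; ring
    _ ≤ 1 - (exp z)⁻¹ := by gcongr; linarith [add_one_le_exp z]
    _ = 1 - exp (-z) := by rw [exp_neg]

lemma add_one_sub_mul_exp_neg_le {θ c x y : ℝ} (hθ0 : 0 ≤ θ) (hθ1 : θ ≤ 1) (hx : 0 ≤ x)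
    (hxc : x ≤ c) (hy : y ≤ exp (-x)) :
    θ + (1 - θ) * y ≤ exp (-((1 - θ * exp c) * x)) := by
  have hconv : exp x - 1 ≤ x * exp c :=
    calc exp x - 1 ≤ x * exp x := by
          have := mul_le_mul_of_nonneg_left (one_sub_le_exp_neg x) (exp_pos x).le
          rw [← exp_add, add_neg_cancel, exp_zero] at this
          linarith
      _ ≤ x * exp c := by gcongr
  calc θ + (1 - θ) * y ≤ θ + (1 - θ) * exp (-x) := by
        have := sub_nonneg.2 hθ1
        gcongr
    _ = (1 + θ * (exp x - 1)) * exp (-x) := by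
        have hexp : exp x * exp (-x) = 1 := by rw [← exp_add, add_neg_cancel, exp_zero]
        linear_combination -θ * hexp
    _ ≤ exp (θ * (x * exp c)) * exp (-x) := by
        gcongr
        rw [add_comm]
        refine le_trans ?_ (add_one_le_exp _)
        gcongr
    _ = exp (-((1 - θ * exp c) * x)) := by rw [← exp_add]; ring_nf

variable {ι : Type*} {P K : ℕ}

lemma expect_pow_shareCount_singleton (h : K ≤ P) (S : ι → KeyRing P K) (i : ι) (q : ℝ) :
    𝔼 x, q ^ shareCount S {i} x = 1 - psf K P + psf K P * q := by
  have := KeyRing.nonempty h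
  have hpow : ∀ x, q ^ shareCount S {i} x
      = (1 - q) * (if Disjoint (S i).1 x.1 then (1 : ℝ) else 0) + q := fun x => by
    by_cases hx : Disjoint (S i).1 x.1
    · simp [shareCount, filter_singleton, hx, disjoint_iff_inter_eq_empty.1 hx]
    · simp [shareCount, filter_singleton, hx, not_disjoint_iff_nonempty_inter.1 hx]
  simp_rw [hpow]
  rw [expect_add_distrib, ← mul_expect, KeyRing.expect_disjoint, (S i).2,
    expect_const univ_nonempty, psf_eq_one_sub_avoidProb]
  ring

lemma expect_pow_shareCount_le_of_subsets (S : ι → KeyRing P K) {b : ℕ} (hb : 0 < b)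
    {T : Finset ι} (hbT : b ≤ #T) {r M : ℝ} (hr1 : r ≤ 1)
    (hM : ∀ W ⊆ T, #W = b → 𝔼 x, exp (-(r * #T / b)) ^ shareCount S W x ≤ M) :
    𝔼 x, (1 - r) ^ shareCount S T x ≤ M := by
  calc 𝔼 x, (1 - r) ^ shareCount S T x ≤ 𝔼 x, exp (-(r * shareCount S T x)) := by
        refine expect_le_expect fun x _ => ?_
        rw [mul_comm, ← mul_neg, exp_nat_mul]
        have := sub_nonneg.2 hr1
        gcongr
        exact one_sub_le_exp_neg r
    _ ≤ M := expect_exp_neg_mul_shareCount_le S hb hbT fun W hWT hWb => by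
        refine le_trans (le_of_eq ?_) (hM W hWT hWb)
        exact expect_congr rfl fun x _ => by rw [← exp_nat_mul]; ring_nf

lemma FewRepetitions.le_card_keyUnion {b : ℕ} {S : ι → KeyRing P K} {T W : Finset ι}
    (hS : FewRepetitions b S T) (hWT : W ⊆ T) (hW : #W ≤ b) :
    63 / 64 * (K * #W : ℝ) ≤ #(keyUnion S W) := by
  have := hS W hWT hW
  rw [repetitions] at this
  linarith

lemma expect_pow_shareCount_le_of_card_le (h : K ≤ P) (hK : 0 < K) {b : ℕ} {S : ι → KeyRing P K}
    {T : Finset ι} (hS : FewRepetitions b S T) (hTb : #T ≤ b) {q : ℝ} (hq0 : 0 ≤ q) (hq1 : q ≤ 1) :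
    𝔼 x, q ^ shareCount S T x ≤ exp (-(63 / 64 * ((1 - q) * psf K P * #T))) := by
  have hK' : (0 : ℝ) < K := by exact_mod_cast hK
  have hq : 0 ≤ (1 - q) * psf K P := mul_nonneg (sub_nonneg.2 hq1) (psf_nonneg K P)
  refine (expect_pow_shareCount_le h S T hq0 hq1).trans ?_
  gcongr
  rw [le_div_iff₀ hK']
  nlinarith [mul_le_mul_of_nonneg_left (hS.le_card_keyUnion subset_rfl hTb) hq]

lemma expect_pow_shareCount_le_of_le_card (h : K ≤ P) (hK : 0 < K) {b : ℕ} (hb : 0 < b)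
    (hbps : 1024 ≤ psf K P * b) {S : ι → KeyRing P K} {T : Finset ι}
    (hS : FewRepetitions b S T) (hbT : b ≤ #T) {r : ℝ} (hr0 : 0 ≤ r) (hr1 : r ≤ 1) :
    𝔼 x, (1 - r) ^ shareCount S T x ≤ exp (-min (31 / 32 * (r * psf K P * #T)) 5) := by
  have hb' : (0 : ℝ) < b := by exact_mod_cast hb
  set z := r * #T / b with hz
  have hz0 : 0 ≤ z := by positivity
  have hmain : 𝔼 x, (1 - r) ^ shareCount S T x
      ≤ exp (-(63 / 64 * ((1 - exp (-z)) * psf K P * b))) :=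
    expect_pow_shareCount_le_of_subsets S hb hbT hr1 fun W hWT hWb => by
      have := expect_pow_shareCount_le_of_card_le h hK
        (fun U hU => hS U (hU.trans hWT)) hWb.le (exp_pos (-z)).le
        (exp_le_one_iff.2 (neg_nonpos.2 hz0))
      rwa [hWb] at this
  refine hmain.trans ?_
  gcongr
  have hhit := div_one_add_le_one_sub_exp_neg hz0
  rcases le_total z (1 / 64) with hz1 | hz1
  · refine (min_le_left _ _).trans ?_
    have hfactor : 64 / 65 * z ≤ 1 - exp (-z) := by
      refine le_trans ?_ hhit
      rw [le_div_iff₀ (by linarith)]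
      nlinarith
    calc 31 / 32 * (r * psf K P * #T) = 31 / 32 * (psf K P * (z * b)) := by
          rw [hz]; field_simp
      _ ≤ 63 / 64 * (64 / 65 * z * psf K P * b) := by
          nlinarith [mul_nonneg (mul_nonneg hz0 (psf_nonneg K P)) hb'.le]
      _ ≤ 63 / 64 * ((1 - exp (-z)) * psf K P * b) := by
          have := psf_nonneg K P
          gcongr
  · refine (min_le_right _ _).trans ?_
    have hfactor : 1 / 65 ≤ 1 - exp (-z) := by
      refine le_trans ?_ hhit
      rw [le_div_iff₀ (by linarith)]
      linarith
    calc (5 : ℝ) ≤ 63 / 64 * (1 / 65 * 1024) := by norm_num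
      _ ≤ 63 / 64 * ((1 - exp (-z)) * (psf K P * b)) := by gcongr
      _ = 63 / 64 * ((1 - exp (-z)) * psf K P * b) := by ring

lemma expect_pow_shareCount_le_of_fewRepetitions (h : K ≤ P) (hK : 0 < K) {b : ℕ} (hb : 0 < b)
    (hbps : 1024 ≤ psf K P * b) {S : ι → KeyRing P K} {T : Finset ι}
    (hS : FewRepetitions b S T) {r : ℝ} (hr0 : 0 ≤ r) (hr1 : r ≤ 1) :
    𝔼 x, (1 - r) ^ shareCount S T x ≤ exp (-min (31 / 32 * (r * psf K P * #T)) 5) := by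
  rcases le_total b #T with hbT | hTb
  · exact expect_pow_shareCount_le_of_le_card h hK hb hbps hS hbT hr0 hr1
  · refine (expect_pow_shareCount_le_of_card_le h hK hS hTb (sub_nonneg.2 hr1)
      (by linarith)).trans ?_
    rw [sub_sub_cancel]
    have : 0 ≤ r * psf K P * #T := by have := psf_nonneg K P; positivity
    gcongr
    exact (min_le_left _ _).trans (by linarith)

lemma expect_pow_shareCount_le_of_psf_near_one (h : K ≤ P) (hps : (1 - psf K P) * exp 6 ≤ 1 / 32)
    (S : ι → KeyRing P K) {T : Finset ι} (hT : T.Nonempty) {r : ℝ} (hr0 : 0 ≤ r) (hr1 : r ≤ 1) :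
    𝔼 x, (1 - r) ^ shareCount S T x ≤ exp (-min (31 / 32 * (r * psf K P * #T)) 5) := by
  have hps1 := psf_le_one K P
  have hrT : 0 ≤ r * #T := by positivity
  have hsub : r * psf K P * #T ≤ r * #T := by
    nlinarith [mul_nonneg hrT (sub_nonneg.2 hps1)]
  calc 𝔼 x, (1 - r) ^ shareCount S T x
      ≤ 1 - psf K P + (1 - (1 - psf K P)) * exp (-(r * #T)) :=
        expect_pow_shareCount_le_of_subsets S one_pos hT.card_pos hr1 fun W _ hW => by
          obtain ⟨i, rfl⟩ := card_eq_one.1 hW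
          rw [expect_pow_shareCount_singleton h, Nat.cast_one, div_one, sub_sub_cancel]
    _ ≤ exp (-((1 - (1 - psf K P) * exp 6) * min (r * #T) 6)) :=
        add_one_sub_mul_exp_neg_le (sub_nonneg.2 hps1) (by linarith [psf_nonneg K P])
          (by positivity) (min_le_right _ _) (by gcongr; exact min_le_left _ _)
    _ ≤ exp (-(31 / 32 * min (r * #T) 6)) := by gcongr; linarith
    _ ≤ exp (-min (31 / 32 * (r * psf K P * #T)) 5) := by
        rw [mul_min_of_nonneg _ _ (by norm_num)]
        gcongr
        norm_num

lemma mul_le_psf_mul_of_two_mul_le (h : K ≤ P) (hK : 0 < K) {a : ℝ} (haK : 2 * a ≤ K)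
    (haP : 2 * a * K ≤ P) : a * K ≤ psf K P * P := by
  have hK' : (0 : ℝ) < K := by exact_mod_cast hK
  have hP' : (0 : ℝ) < P := by exact_mod_cast hK.trans_le h
  refine le_trans ?_ (mul_le_mul_of_nonneg_right (sq_div_add_sq_le_psf h) hP'.le)
  rw [div_mul_eq_mul_div, le_div_iff₀ (by positivity)]
  nlinarith [mul_le_mul_of_nonneg_right haK (mul_pos hK' hP').le,
    mul_le_mul_of_nonneg_right haP (sq_nonneg (K : ℝ))]

lemma one_sub_psf_mul_le_one (h : K ≤ P) (hK : 0 < K) {a : ℝ} (ha : P * a ≤ (K : ℝ) ^ 2) :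
    (1 - psf K P) * a ≤ 1 := by
  have hP' : (0 : ℝ) < P := by exact_mod_cast hK.trans_le h
  rcases le_total a 0 with ha0 | ha0
  · nlinarith [psf_le_one K P]
  calc (1 - psf K P) * a ≤ (1 - (K : ℝ) ^ 2 / (P + (K : ℝ) ^ 2)) * a := by
        gcongr
        exact sq_div_add_sq_le_psf h
    _ = P * a / (P + (K : ℝ) ^ 2) := by field_simp; ring
    _ ≤ 1 := div_le_one_of_le₀ (by linarith) (by positivity)

/- If rings are small compared with the pool, sets `W` of size about `1 / psf K P` are small enough
to have few repetitions and large enough to saturate the bound. Otherwise two rings almost always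
meet and no control of repetitions is needed. -/
lemma exists_forall_fewRepetitions_expect_pow_le (h : K ≤ P) (hK : 65600 * exp 134 ≤ K) :
    ∃ b : ℕ, b * K * exp 128 ≤ P ∧
      ∀ (S : ι → KeyRing P K) (T : Finset ι), T.Nonempty → FewRepetitions b S T →
        ∀ r : ℝ, 0 ≤ r → r ≤ 1 →
          𝔼 x, (1 - r) ^ shareCount S T x ≤ exp (-min (31 / 32 * (r * psf K P * #T)) 5) := by
  have hK' : (0 : ℝ) < K := (by positivity : (0 : ℝ) < 65600 * exp 134).trans_le hK
  have hKpos : 0 < K := by exact_mod_cast hK'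
  rw [show (134 : ℝ) = 6 + 128 by norm_num, exp_add] at hK
  rcases le_total (2050 * exp 128 * K) P with hsparse | hdense
  · have h2050 : 2050 * exp 128 ≤ K := by
      nlinarith [one_le_exp (show (0 : ℝ) ≤ 6 by norm_num), exp_pos 128]
    have hpool : 1025 * exp 128 * K ≤ psf K P * P :=
      mul_le_psf_mul_of_two_mul_le h hKpos (by linarith) (by linarith)
    have hps0 : 0 < psf K P :=
      pos_of_mul_pos_left ((by positivity : (0 : ℝ) < 1025 * exp 128 * K).trans_le hpool)
        P.cast_nonneg
    have hceil : ⌈1024 / psf K P⌉₊ * psf K P ≤ 1025 := by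
      have := (Nat.ceil_lt_add_one (show 0 ≤ 1024 / psf K P by positivity)).le
      rw [div_add_one hps0.ne', le_div_iff₀ hps0] at this
      linarith [psf_le_one K P]
    refine ⟨⌈1024 / psf K P⌉₊, ?_, fun S T _ hS r hr0 hr1 =>
      expect_pow_shareCount_le_of_fewRepetitions h hKpos (Nat.ceil_pos.2 (by positivity))
        ((div_le_iff₀' hps0).1 (Nat.le_ceil _)) hS hr0 hr1⟩
    refine le_of_mul_le_mul_left ?_ hps0
    calc psf K P * (⌈1024 / psf K P⌉₊ * K * exp 128)
        = ⌈1024 / psf K P⌉₊ * psf K P * (K * exp 128) := by ring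
      _ ≤ 1025 * (K * exp 128) := by gcongr
      _ ≤ psf K P * P := by linarith
  · refine ⟨0, by simp, fun S T hT _ r hr0 hr1 =>
      expect_pow_shareCount_le_of_psf_near_one h ?_ S hT hr0 hr1⟩
    have hone := one_sub_psf_mul_le_one h hKpos (a := 32 * exp 6) (by
      nlinarith [mul_le_mul_of_nonneg_right hdense (exp_pos 6).le,
        mul_le_mul_of_nonneg_right hK hK'.le])
    linarith

end CollisionExponent

section SparseBoundary

variable {V : Type*} [Fintype V] [DecidableEq V]

open Classical in
/-- The vertices outside `T` adjacent to a vertex of `T`. -/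
def outNbrs (G : SimpleGraph V) (T : Finset V) : Finset V := {v ∈ Tᶜ | ∃ i ∈ T, G.Adj i v}

lemma mem_outNbrs {G : SimpleGraph V} {T : Finset V} {v : V} :
    v ∈ outNbrs G T ↔ v ∉ T ∧ ∃ i ∈ T, G.Adj i v := by
  simp only [outNbrs, mem_filter, mem_compl]

/-- Some nonempty set of at most half of the vertices has fewer than `k` outer neighbours. Both
failure of `k`-connectivity and a vertex of degree less than `k` are of this kind. -/
def HasSparseBoundary (G : SimpleGraph V) (k : ℕ) : Prop :=
  ∃ T : Finset V, T.Nonempty ∧ 2 * #T ≤ Fintype.card V ∧ #(outNbrs G T) < k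

open Classical in
lemma outNbrs_component_subset (G : SimpleGraph V) (S : Finset V)
    (c : (G.induce ((S : Set V)ᶜ)).ConnectedComponent) :
    outNbrs G (c.supp.toFinset.map (Function.Embedding.subtype _)) ⊆ S := by
  intro v hv
  obtain ⟨hvc, i, hi, hadj⟩ := mem_outNbrs.1 hv
  by_contra hvS
  obtain ⟨⟨i, hiS⟩, hic, rfl⟩ := mem_map.1 hi
  refine hvc (mem_map.2 ⟨⟨v, by simpa using hvS⟩, ?_, rfl⟩)
  rw [Set.mem_toFinset, SimpleGraph.ConnectedComponent.mem_supp_iff] at hic ⊢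
  rw [← hic, SimpleGraph.ConnectedComponent.eq]
  exact SimpleGraph.Adj.reachable (by simpa using hadj.symm)

lemma hasSparseBoundary_of_not_kConnected {G : SimpleGraph V} {k : ℕ} (hk : 1 ≤ k)
    (hkV : k ≤ Fintype.card V) (h : ¬ KConnected G k) : HasSparseBoundary G k := by
  classical
  simp only [KConnected, not_forall] at h
  obtain ⟨S, hS, hdisconn⟩ := h
  have hne : Nonempty ((S : Set V)ᶜ : Set V) := by
    obtain ⟨v, hv⟩ := exists_mem_notMem_of_card_lt_card (s := S) (t := univ) (by
      rw [card_univ]; omega)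
    exact ⟨⟨v, by simpa using hv.2⟩⟩
  obtain ⟨u, w, huw⟩ : ∃ u w, ¬ (G.induce ((S : Set V)ᶜ)).Reachable u w := by
    by_contra! hall
    exact hdisconn ⟨hall⟩
  let side (x : ((S : Set V)ᶜ : Set V)) : Finset V :=
    ((G.induce ((S : Set V)ᶜ)).connectedComponentMk x).supp.toFinset.map
      (Function.Embedding.subtype _)
  have hside (x) : (side x).Nonempty ∧ #(outNbrs G (side x)) < k :=
    ⟨⟨x, mem_map.2 ⟨x, by simp, rfl⟩⟩,
      (card_le_card (outNbrs_component_subset G S _)).trans_lt (by omega)⟩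
  have hdisj : Disjoint (side u) (side w) := by
    rw [Finset.disjoint_map, Set.disjoint_toFinset]
    exact SimpleGraph.pairwise_disjoint_supp_connectedComponent _
      fun heq => huw (SimpleGraph.ConnectedComponent.eq.1 heq)
  have hcard : #(side u) + #(side w) ≤ Fintype.card V := by
    rw [← card_union_of_disjoint hdisj]
    exact card_le_univ _
  rcases le_total #(side u) #(side w) with hle | hle
  · exact ⟨side u, (hside u).1, by omega, (hside u).2⟩
  · exact ⟨side w, (hside w).1, by omega, (hside w).2⟩

lemma card_outNbrs_singleton (G : SimpleGraph V) (v : V) : #(outNbrs G {v}) = gDeg G v := by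
  classical
  rw [gDeg, Nat.card_eq_fintype_card, Fintype.card_subtype]
  congr 1
  ext w
  simp only [mem_outNbrs, mem_singleton, exists_eq_left, mem_filter, mem_univ, true_and,
    and_iff_right_iff_imp]
  exact fun hadj => hadj.ne'

lemma hasSparseBoundary_of_not_le_minDeg {G : SimpleGraph V} {k : ℕ}
    (hV : 2 ≤ Fintype.card V) (h : ¬ k ≤ minDeg G) : HasSparseBoundary G k := by
  have : Nonempty V := Fintype.card_pos_iff.1 (by omega)
  obtain ⟨v, hv⟩ : minDeg G ∈ Set.range (gDeg G) := Nat.sInf_mem (Set.range_nonempty _)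
  exact ⟨{v}, singleton_nonempty v, by simpa using hV,
    by rw [card_outNbrs_singleton, hv]; omega⟩

end SparseBoundary

section Measure

lemma isProbabilityMeasure_bern {p : ℝ} (hp0 : 0 ≤ p) (hp1 : p ≤ 1) :
    IsProbabilityMeasure (bern p) := by
  constructor
  simp only [bern, Measure.coe_add, Measure.coe_smul, Pi.add_apply, Pi.smul_apply, smul_eq_mul,
    measure_univ, mul_one]
  rw [← ENNReal.ofReal_add hp0 (by linarith), add_sub_cancel, ENNReal.ofReal_one]

lemma isProbabilityMeasure_uniformKeyMeasure {P K : ℕ} (h : K ≤ P) :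
    IsProbabilityMeasure (uniformKeyMeasure P K) := by
  have := KeyRing.nonempty h
  constructor
  simp only [uniformKeyMeasure, Measure.coe_smul, Pi.smul_apply, smul_eq_mul,
    Measure.count_univ, ENat.card_eq_coe_fintype_card]
  exact ENNReal.inv_mul_cancel (Nat.cast_ne_zero.2 Fintype.card_ne_zero) (by simp)

lemma isProbabilityMeasure_gonMeasure {n K P : ℕ} {p : ℝ} (h : K ≤ P) (hp0 : 0 ≤ p)
    (hp1 : p ≤ 1) : IsProbabilityMeasure (gonMeasure n K P p) := by
  have := isProbabilityMeasure_bern hp0 hp1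
  have := isProbabilityMeasure_uniformKeyMeasure h
  unfold gonMeasure
  infer_instance

lemma pi_bern_real_forall_eq_false {E : Type*} [Fintype E] {p : ℝ} (hp0 : 0 ≤ p) (hp1 : p ≤ 1)
    (F : Finset E) :
    (Measure.pi fun _ : E => bern p).real {C | ∀ e ∈ F, C e = false} = (1 - p) ^ #F := by
  classical
  have := isProbabilityMeasure_bern hp0 hp1
  have hset : {C : E → Bool | ∀ e ∈ F, C e = false}
      = Set.pi Set.univ fun e => if e ∈ F then {false} else Set.univ := by
    ext C
    simp only [Set.mem_ofPred_eq, Set.mem_pi, Set.mem_univ, true_imp_iff]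
    refine forall_congr' fun e => ?_
    split_ifs with he <;> simp [he]
  have hfactor : ∀ e, (bern p).real (if e ∈ F then {false} else Set.univ)
      = if e ∈ F then 1 - p else 1 := fun e => by
    split_ifs
    · simp [bern, Measure.real, hp1]
    · exact probReal_univ
  rw [hset, Measure.real, Measure.pi_pi, ENNReal.toReal_prod]
  exact (prod_congr rfl fun e _ => hfactor e).trans (by rw [prod_ite_mem, univ_inter, prod_const])

lemma integral_pi_bern_prod {ι E : Type*} [Fintype E] {p : ℝ} (hp0 : 0 ≤ p)
    (hp1 : p ≤ 1) {F : ι → Finset E} {R : Finset ι} (hF : (R : Set ι).PairwiseDisjoint F) (θ : ℝ) :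
    ∫ C, ∏ v ∈ R, (θ + (1 - θ) * {C | ∀ e ∈ F v, C e = false}.indicator 1 C)
        ∂(Measure.pi fun _ : E => bern p)
      = ∏ v ∈ R, (θ + (1 - θ) * (1 - p) ^ #(F v)) := by
  classical
  have := isProbabilityMeasure_bern hp0 hp1
  have hexpand : ∀ C : E → Bool,
      ∏ v ∈ R, (θ + (1 - θ) * {C | ∀ e ∈ F v, C e = false}.indicator 1 C)
        = ∑ J ∈ R.powerset, θ ^ #J * (1 - θ) ^ #(R \ J) *
            {C | ∀ e ∈ (R \ J).biUnion F, C e = false}.indicator 1 C := fun C => by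
    rw [prod_add]
    refine sum_congr rfl fun J _ => ?_
    rw [prod_mul_distrib, prod_const, prod_const, mul_assoc]
    congr 2
    simp only [Set.indicator_apply, Set.mem_ofPred_eq, mem_biUnion, Pi.one_apply, prod_ite_zero,
      prod_const_one]
    congr 1
    exact propext ⟨fun hC e ⟨v, hv, he⟩ => hC v hv e he, fun hC v hv e he => hC e ⟨v, hv, he⟩⟩
  simp_rw [hexpand]
  rw [integral_finsetSum _ fun _ _ => Integrable.of_finite, prod_add]
  refine sum_congr rfl fun J _ => ?_
  rw [integral_const_mul, integral_indicator_one (Set.toFinite _).measurableSet,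
    pi_bern_real_forall_eq_false hp0 hp1,
    card_biUnion (fun v hv w hw => hF (sdiff_subset hv) (sdiff_subset hw)),
    prod_mul_distrib, prod_const, prod_const, prod_pow_eq_pow_sum, mul_assoc]

lemma lintegral_pi_uniformKeyMeasure {n K P : ℕ} (h : K ≤ P) {f : (Fin n → KeyRing P K) → ℝ}
    (hf : ∀ S, 0 ≤ f S) :
    ∫⁻ S, ENNReal.ofReal (f S) ∂(Measure.pi fun _ : Fin n => uniformKeyMeasure P K)
      = ENNReal.ofReal (𝔼 S, f S) := by
  have := KeyRing.nonempty h
  have := isProbabilityMeasure_uniformKeyMeasure h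
  have hcard : (0 : ℝ) < Fintype.card (KeyRing P K) := by exact_mod_cast Fintype.card_pos
  have hsingleton : ∀ S : Fin n → KeyRing P K,
      (Measure.pi fun _ : Fin n => uniformKeyMeasure P K) {S}
        = ENNReal.ofReal (Fintype.card (Fin n → KeyRing P K) : ℝ)⁻¹ := fun S => by
    rw [Measure.pi_singleton]
    simp only [uniformKeyMeasure, Measure.coe_smul, Pi.smul_apply,
      smul_eq_mul, Measure.count_singleton, mul_one, prod_const, card_univ, Fintype.card_fin,
      Fintype.card_fun, Nat.cast_pow]
    rw [ENNReal.ofReal_inv_of_pos (by positivity), ENNReal.ofReal_pow hcard.le,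
      ENNReal.ofReal_natCast, ENNReal.inv_pow]
  rw [lintegral_fintype, Fintype.expect_eq_sum_div_card, div_eq_mul_inv, sum_mul,
    ENNReal.ofReal_sum_of_nonneg fun S _ => mul_nonneg (hf S) (by positivity)]
  exact sum_congr rfl fun S _ => by rw [hsingleton, ENNReal.ofReal_mul (hf S)]

lemma gonMeasure_le_expect {n K P : ℕ} {p : ℝ} (h : K ≤ P) (hp0 : 0 ≤ p) (hp1 : p ≤ 1)
    (B : Set (GonSpace n K P)) {f : (Fin n → KeyRing P K) → ℝ} (hf0 : ∀ S, 0 ≤ f S)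
    (hf : ∀ S, (Measure.pi fun _ : Sym2 (Fin n) => bern p) {C | (S, C) ∈ B}
      ≤ ENNReal.ofReal (f S)) :
    gonMeasure n K P p B ≤ ENNReal.ofReal (𝔼 S, f S) := by
  have := isProbabilityMeasure_bern hp0 hp1
  have := isProbabilityMeasure_uniformKeyMeasure h
  rw [gonMeasure, Measure.prod_apply (Set.toFinite _).measurableSet,
    ← lintegral_pi_uniformKeyMeasure h hf0]
  exact lintegral_mono fun S => hf S

end Measure

section Chernoff

variable {n K P : ℕ}

/-- The pairs `s(i, v)` with `i ∈ T` whose key rings meet: the potential edges from `v` to `T`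
once the key rings are known. -/
def sharedPairs {ι : Type*} [DecidableEq ι] (S : ι → KeyRing P K) (T : Finset ι) (v : ι) :
    Finset (Sym2 ι) :=
  {i ∈ T | ((S i).1 ∩ (S v).1).Nonempty}.image fun i => s(i, v)

lemma card_sharedPairs {ι : Type*} [DecidableEq ι] (S : ι → KeyRing P K) (T : Finset ι) (v : ι) :
    #(sharedPairs S T v) = shareCount S T (S v) :=
  card_image_of_injective _ fun _ _ => Sym2.congr_left.1

lemma pairwiseDisjoint_sharedPairs {ι : Type*} [Fintype ι] [DecidableEq ι] (S : ι → KeyRing P K)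
    (T : Finset ι) : ((Tᶜ : Finset ι) : Set ι).PairwiseDisjoint (sharedPairs S T) := by
  intro v _ w hw hvw
  rw [Function.onFun, Finset.disjoint_left]
  intro e hev hew
  obtain ⟨i, hi, rfl⟩ := mem_image.1 hev
  obtain ⟨j, -, hij⟩ := mem_image.1 hew
  rcases Sym2.eq_iff.1 hij with ⟨-, hwv⟩ | ⟨-, hwi⟩
  · exact hvw hwv.symm
  · exact (mem_compl.1 hw) (hwi ▸ (mem_filter.1 hi).1)

lemma mem_outNbrs_gonGraph {S : Fin n → KeyRing P K} {C : Sym2 (Fin n) → Bool}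
    {T : Finset (Fin n)} {v : Fin n} (hv : v ∉ T) :
    v ∈ outNbrs (gonGraph (S, C)) T ↔ ¬ ∀ e ∈ sharedPairs S T v, C e = false := by
  simp only [mem_outNbrs, hv, not_false_eq_true, true_and, sharedPairs, forall_mem_image,
    mem_filter, not_forall, Bool.not_eq_false, exists_prop, gonGraph, and_assoc]
  exact exists_congr fun i => and_congr_right fun hi =>
    and_iff_right (ne_of_mem_of_not_mem hi hv)

lemma pow_card_outNbrs_gonGraph (S : Fin n → KeyRing P K) (C : Sym2 (Fin n) → Bool)
    (T : Finset (Fin n)) (θ : ℝ) :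
    θ ^ #(outNbrs (gonGraph (S, C)) T)
      = ∏ v ∈ Tᶜ, (θ + (1 - θ) * {C | ∀ e ∈ sharedPairs S T v, C e = false}.indicator 1 C) := by
  classical
  have hfilter : outNbrs (gonGraph (S, C)) T
      = {v ∈ Tᶜ | ¬ ∀ e ∈ sharedPairs S T v, C e = false} := by
    ext v
    rw [mem_filter, mem_compl]
    by_cases hv : v ∈ T
    · simp [mem_outNbrs, hv]
    · rw [mem_outNbrs_gonGraph hv, and_iff_right hv]
  rw [hfilter, ← prod_const, prod_filter]
  refine prod_congr rfl fun v _ => ?_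
  simp only [Set.indicator_apply, Set.mem_ofPred_eq, ite_not, Pi.one_apply]
  split_ifs <;> ring

/- Chernoff's method for fixed key rings: given these, the vertices outside `T` are outer
neighbours of `T` independently of each other. -/
lemma pi_bern_card_outNbrs_lt_le {p θ : ℝ} (hp0 : 0 ≤ p) (hp1 : p ≤ 1) (hθ0 : 0 < θ)
    (hθ1 : θ ≤ 1) (k : ℕ) (S : Fin n → KeyRing P K) (T : Finset (Fin n)) :
    (Measure.pi fun _ : Sym2 (Fin n) => bern p) {C | #(outNbrs (gonGraph (S, C)) T) < k}
      ≤ ENNReal.ofReal ((θ ^ (k - 1))⁻¹ *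
          ∏ v ∈ Tᶜ, (θ + (1 - θ) * (1 - p) ^ shareCount S T (S v))) := by
  have := isProbabilityMeasure_bern hp0 hp1
  have hintegral : ∫ C, θ ^ #(outNbrs (gonGraph (S, C)) T)
      ∂(Measure.pi fun _ : Sym2 (Fin n) => bern p)
        = ∏ v ∈ Tᶜ, (θ + (1 - θ) * (1 - p) ^ shareCount S T (S v)) := by
    simp only [pow_card_outNbrs_gonGraph, ← card_sharedPairs]
    exact integral_pi_bern_prod hp0 hp1 (pairwiseDisjoint_sharedPairs S T) θ
  have hpos : 0 < θ ^ (k - 1) := by positivity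
  rw [← ofReal_measureReal, ← hintegral, ← integral_const_mul,
    ← integral_indicator_one (Set.toFinite _).measurableSet]
  refine ENNReal.ofReal_le_ofReal
    (integral_mono Integrable.of_finite Integrable.of_finite fun C => ?_)
  refine Set.indicator_apply_le' (fun hC => ?_) fun _ => by positivity
  rw [inv_mul_eq_div, Pi.one_apply, le_div_iff₀ hpos, one_mul]
  exact pow_le_pow_of_le_one hθ0.le hθ1 (Nat.le_sub_one_of_lt hC)

lemma pi_bern_hasSparseBoundary_le {p θ : ℝ} (hp0 : 0 ≤ p) (hp1 : p ≤ 1) (hθ0 : 0 < θ)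
    (hθ1 : θ ≤ 1) (k : ℕ) (S : Fin n → KeyRing P K) :
    (Measure.pi fun _ : Sym2 (Fin n) => bern p) {C | HasSparseBoundary (gonGraph (S, C)) k}
      ≤ ENNReal.ofReal (∑ T : Finset (Fin n) with T.Nonempty ∧ 2 * #T ≤ n, (θ ^ (k - 1))⁻¹ *
          ∏ v ∈ Tᶜ, (θ + (1 - θ) * (1 - p) ^ shareCount S T (S v))) := by
  have hsub : {C | HasSparseBoundary (gonGraph (S, C)) k}
      ⊆ ⋃ T ∈ ({T | T.Nonempty ∧ 2 * #T ≤ n} : Finset (Finset (Fin n))),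
          {C | #(outNbrs (gonGraph (S, C)) T) < k} := by
    rintro C ⟨T, hne, hle, hlt⟩
    simp only [Set.mem_iUnion]
    exact ⟨T, by simpa [hne] using hle, hlt⟩
  have := sub_nonneg.2 hp1
  have := sub_nonneg.2 hθ1
  rw [ENNReal.ofReal_sum_of_nonneg fun T _ => by positivity]
  exact (measure_mono hsub).trans ((measure_biUnion_finset_le _ _).trans
    (sum_le_sum fun T _ => pi_bern_card_outNbrs_lt_le hp0 hp1 hθ0 hθ1 k S T))

/-- The Chernoff bound for the number of outer neighbours of `T`, with Chernoff parameter `θ` and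
channel probability `r`, averaged over the key rings with few repetitions in `T`. -/
def chernoffTerm (P K b : ℕ) (θ r : ℝ) (T : Finset (Fin n)) : ℝ :=
  𝔼 S : Fin n → KeyRing P K, {S | FewRepetitions b S T}.indicator
    (fun S => (θ + (1 - θ) * 𝔼 x, (1 - r) ^ shareCount S T x) ^ #Tᶜ) S

lemma fewRepetitions_update_iff {b : ℕ} (S : Fin n → KeyRing P K) {T : Finset (Fin n)} {v : Fin n}
    (hv : v ∉ T) (x : KeyRing P K) :
    FewRepetitions b (Function.update S v x) T ↔ FewRepetitions b S T :=
  forall₂_congr fun W hW => by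
    rw [repetitions, repetitions, keyUnion_update_of_notMem S fun hvW => hv (hW hvW)]

lemma expect_indicator_mul_prod_eq_chernoffTerm (h : K ≤ P) (b : ℕ) (θ r : ℝ)
    (T : Finset (Fin n)) :
    𝔼 S : Fin n → KeyRing P K, {S | FewRepetitions b S T}.indicator 1 S *
        ∏ v ∈ Tᶜ, (θ + (1 - θ) * (1 - r) ^ shareCount S T (S v))
      = chernoffTerm P K b θ r T := by
  classical
  have := KeyRing.nonempty h
  rw [expect_mul_prod Tᶜ (fun S => {S | FewRepetitions b S T}.indicator 1 S)
    (fun S x => θ + (1 - θ) * (1 - r) ^ shareCount S T x)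
    (fun v hv S x => by
      simp only [Set.indicator_apply, Set.mem_ofPred_eq, Pi.one_apply,
        fewRepetitions_update_iff S (mem_compl.1 hv)])
    (fun v hv S x => by simp only [shareCount_update_of_notMem S (mem_compl.1 hv)])]
  refine expect_congr rfl fun S _ => ?_
  rw [expect_add_distrib, expect_const univ_nonempty, ← mul_expect]
  simp only [Set.indicator_apply, Pi.one_apply, ite_mul, one_mul, zero_mul]

lemma gonMeasure_hasSparseBoundary_le {p r θ : ℝ} (h : K ≤ P) (hr0 : 0 ≤ r) (hrp : r ≤ p)
    (hp1 : p ≤ 1) (hθ0 : 0 < θ) (hθ1 : θ ≤ 1) (k b : ℕ) :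
    gonMeasure n K P p {ω | HasSparseBoundary (gonGraph ω) k}
      ≤ ENNReal.ofReal (
        𝔼 S : Fin n → KeyRing P K, {S | ¬ FewRepetitions b S univ}.indicator 1 S +
        ∑ T : Finset (Fin n) with T.Nonempty ∧ 2 * #T ≤ n,
          (θ ^ (k - 1))⁻¹ * chernoffTerm P K b θ r T) := by
  have hp0 := hr0.trans hrp
  have := sub_nonneg.2 hp1
  have := sub_nonneg.2 (hrp.trans hp1)
  have := sub_nonneg.2 hθ1
  have := isProbabilityMeasure_bern hp0 hp1
  have hind : ∀ (s : Set (Fin n → KeyRing P K)) S, (0 : ℝ) ≤ s.indicator 1 S := fun s S =>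
    Set.indicator_nonneg (fun _ _ => zero_le_one) S
  have hterm : ∀ (S : Fin n → KeyRing P K) (T : Finset (Fin n)), 0 ≤ (θ ^ (k - 1))⁻¹ *
      ({S | FewRepetitions b S T}.indicator 1 S *
        ∏ v ∈ Tᶜ, (θ + (1 - θ) * (1 - r) ^ shareCount S T (S v))) := fun S T =>
    mul_nonneg (by positivity) (mul_nonneg (hind _ S) (by positivity))
  simp only [← expect_indicator_mul_prod_eq_chernoffTerm h, mul_expect, ← expect_sum_comm,
    ← expect_add_distrib]
  refine gonMeasure_le_expect h hp0 hp1 _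
    (fun S => add_nonneg (hind _ S) (sum_nonneg fun T _ => hterm S T)) fun S => ?_
  by_cases hS : FewRepetitions b S univ
  · refine (pi_bern_hasSparseBoundary_le hp0 hp1 hθ0 hθ1 k S).trans
      (ENNReal.ofReal_le_ofReal (le_add_of_nonneg_of_le (hind _ S) ?_))
    gcongr with T
    have hmem : S ∈ {S | FewRepetitions b S T} := hS.mono (subset_univ T)
    rw [Set.indicator_of_mem hmem, Pi.one_apply, one_mul]
    gcongr
  · refine prob_le_one.trans ?_
    have hmem : S ∈ {S : Fin n → KeyRing P K | ¬ FewRepetitions b S univ} := hS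
    rw [Set.indicator_of_mem hmem, ← ENNReal.ofReal_one]
    exact ENNReal.ofReal_le_ofReal (le_add_of_nonneg_right (sum_nonneg fun T _ => hterm S T))

lemma chernoffTerm_le_expect {b : ℕ} {θ r c : ℝ} (hθ0 : 0 ≤ θ) (hθ1 : θ ≤ 1)
    (hr1 : r ≤ 1) (T : Finset (Fin n)) {x : (Fin n → KeyRing P K) → ℝ}
    (hx0 : ∀ S, 0 ≤ x S) (hxc : ∀ S, x S ≤ c)
    (hx : ∀ S, FewRepetitions b S T → 𝔼 y, (1 - r) ^ shareCount S T y ≤ exp (-x S)) :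
    chernoffTerm P K b θ r T
      ≤ 𝔼 S : Fin n → KeyRing P K, exp (-((1 - θ * exp c) * x S * (n - #T))) := by
  have hTc : (#Tᶜ : ℝ) = n - #T := by
    rw [card_compl, Fintype.card_fin, Nat.cast_sub (card_finset_fin_le T)]
  refine expect_le_expect fun S _ => Set.indicator_apply_le' (fun hS => ?_) fun _ => (exp_pos _).le
  have : 0 ≤ 𝔼 y, (1 - r) ^ shareCount S T y :=
    expect_nonneg fun y _ => pow_nonneg (sub_nonneg.2 hr1) _
  have := sub_nonneg.2 hθ1
  calc (θ + (1 - θ) * 𝔼 y, (1 - r) ^ shareCount S T y) ^ #Tᶜ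
      ≤ exp (-((1 - θ * exp c) * x S)) ^ #Tᶜ := by
        gcongr
        exact add_one_sub_mul_exp_neg_le hθ0 hθ1 (hx0 S) (hxc S) (hx S hS)
    _ = exp (-((1 - θ * exp c) * x S * (n - #T))) := by
        rw [← exp_nat_mul, hTc]; ring_nf

lemma chernoffTerm_le_exp {b : ℕ} {θ r c x : ℝ} (h : K ≤ P) (hθ0 : 0 ≤ θ) (hθ1 : θ ≤ 1)
    (hr1 : r ≤ 1) (T : Finset (Fin n)) (hx0 : 0 ≤ x) (hxc : x ≤ c)
    (hx : ∀ S : Fin n → KeyRing P K, FewRepetitions b S T →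
      𝔼 y, (1 - r) ^ shareCount S T y ≤ exp (-x)) :
    chernoffTerm P K b θ r T ≤ exp (-((1 - θ * exp c) * x * (n - #T))) := by
  have := KeyRing.nonempty h
  exact (chernoffTerm_le_expect hθ0 hθ1 hr1 T (fun _ => hx0) (fun _ => hxc) hx).trans_eq
    (expect_const univ_nonempty _)

end Chernoff

section VertexSets

variable {n K P b : ℕ}

lemma one_sub_add_le_mul {u v : ℝ} (hu : 0 ≤ u) (hv : 0 ≤ v) :
    1 - (u + v) ≤ (1 - u) * (1 - v) := by
  linarith [mul_nonneg hu hv]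

/- Sets of `b = 1` vertices see no repetitions, and the concavity of `z ↦ 1 - exp (-z)` costs only
a factor `1 / (1 + r * #T)`. -/
lemma chernoffTerm_le_of_singletons (h : K ≤ P) {θ r c : ℝ} (hθ0 : 0 ≤ θ) (hθ1 : θ ≤ 1)
    (hr0 : 0 ≤ r) (hr1 : r ≤ 1) {T : Finset (Fin n)} (hT : T.Nonempty)
    (hc : r * psf K P * #T ≤ c) :
    chernoffTerm P K b θ r T
      ≤ exp (-((1 - θ * exp c) * (r * psf K P * #T / (1 + r * #T)) * (n - #T))) := by
  have hps := psf_nonneg K P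
  refine chernoffTerm_le_exp h hθ0 hθ1 hr1 T (by positivity)
    ((div_le_self (by positivity) (le_add_of_nonneg_right (by positivity))).trans hc) fun S _ => ?_
  refine expect_pow_shareCount_le_of_subsets S one_pos hT.card_pos hr1 fun W _ hW => ?_
  obtain ⟨i, rfl⟩ := card_eq_one.1 hW
  have hsat := div_one_add_le_one_sub_exp_neg (show 0 ≤ r * (#T : ℝ) by positivity)
  rw [expect_pow_shareCount_singleton h, Nat.cast_one, div_one]
  calc 1 - psf K P + psf K P * exp (-(r * #T))
      = 1 - psf K P * (1 - exp (-(r * #T))) := by ring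
    _ ≤ 1 - psf K P * (r * #T / (1 + r * #T)) := by gcongr
    _ ≤ exp (-(psf K P * (r * #T / (1 + r * #T)))) := one_sub_le_exp_neg _
    _ = exp (-(r * psf K P * #T / (1 + r * #T))) := by ring_nf

/- The bound of `expect_pow_shareCount_le` misses the mean only by the repetitions in `T`, whose
exponential moment is under control. -/
lemma chernoffTerm_le_of_repetitions (h : K ≤ P) (hK : 0 < K) {θ r c : ℝ} (hθ0 : 0 ≤ θ)
    (hθ1 : θ ≤ 1) (hr0 : 0 ≤ r) (hr1 : r ≤ 1) (hθc : θ * exp c ≤ 1) {T : Finset (Fin n)}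
    (hc : r * psf K P * #T ≤ c) {s : ℝ}
    (hs : s = (1 - θ * exp c) * (n - #T) * (r * psf K P) / K) :
    chernoffTerm P K b θ r T
      ≤ exp (-(s * (K * #T)) + (#T : ℝ) ^ 2 * ((K : ℝ) ^ 2 / P) * exp s) := by
  have hK' : (0 : ℝ) < K := by exact_mod_cast hK
  have hps := psf_nonneg K P
  have hs0 : 0 ≤ s := by
    have hTn : (#T : ℝ) ≤ n := by exact_mod_cast card_finset_fin_le T
    rw [hs]
    have := sub_nonneg.2 hθc
    have := sub_nonneg.2 hTn
    positivity
  have hunion : ∀ S : Fin n → KeyRing P K, (#(keyUnion S T) : ℝ) ≤ #T * K := fun S => by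
    exact_mod_cast card_keyUnion_le S T
  calc chernoffTerm P K b θ r T
      ≤ 𝔼 S : Fin n → KeyRing P K,
          exp (-((1 - θ * exp c) * (r * psf K P * #(keyUnion S T) / K) * (n - #T))) := by
        refine chernoffTerm_le_expect hθ0 hθ1 hr1 T (fun S => by positivity) (fun S => ?_)
          fun S _ => ?_
        · refine le_trans ?_ hc
          rw [div_le_iff₀ hK', mul_assoc _ (#T : ℝ)]
          gcongr
          exact hunion S
        · simpa only [sub_sub_cancel] using
            expect_pow_shareCount_le h S T (sub_nonneg.2 hr1) (sub_le_self 1 hr0)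
    _ = 𝔼 S : Fin n → KeyRing P K, exp (-(s * (K * #T))) * exp (s * repetitions S T) := by
        refine expect_congr rfl fun S _ => ?_
        rw [← exp_add, repetitions, hs]
        ring_nf
    _ ≤ exp (-(s * (K * #T))) * exp ((#T : ℝ) ^ 2 * ((K : ℝ) ^ 2 / P) * exp s) := by
        rw [← mul_expect]
        gcongr
        exact expect_exp_mul_repetitions_le h hs0 T
    _ = exp (-(s * (K * #T)) + (#T : ℝ) ^ 2 * ((K : ℝ) ^ 2 / P) * exp s) := (exp_add _ _).symm

end VertexSets

section SmallSets

variable {n K P b : ℕ} {r L E : ℝ} {T : Finset (Fin n)}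

lemma sub_le_mul_one_sub_mul_one_sub {c D u v w : ℝ} (hD0 : 0 ≤ D) (hu : 0 ≤ u) (hv : 0 ≤ v)
    (hw : 0 ≤ w) (hw1 : w ≤ 1) (hc : D * (u + v + w) ≤ c) :
    D - c ≤ D * ((1 - u) * (1 - v) * (1 - w)) :=
  calc D - c ≤ D * (1 - (u + v + w)) := by linarith
    _ ≤ D * ((1 - (u + v)) * (1 - w)) := by gcongr; exact one_sub_add_le_mul (by positivity) hw
    _ ≤ D * ((1 - u) * (1 - v) * (1 - w)) := by
        have := sub_nonneg.2 hw1
        gcongr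
        exact one_sub_add_le_mul hu hv

lemma mul_psf_mul_card_le (hr0 : 0 ≤ r) (hE : 0 ≤ E) (hD : n * (r * psf K P) ≤ 3 * L)
    (hTn : #T ≤ E * n) (hLE : 6 * L * E ≤ 1) : r * psf K P * #T ≤ 5 := by
  have hps := psf_nonneg K P
  calc r * psf K P * #T ≤ r * psf K P * (E * n) := by gcongr
    _ = n * (r * psf K P) * E := by ring
    _ ≤ 3 * L * E := by gcongr
    _ ≤ 5 := by linarith

lemma chernoffTerm_le_of_channel_le (h : K ≤ P) (hr0 : 0 ≤ r) (hr1 : r ≤ 1) (hL : exp 5 ≤ L)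
    (hD : n * (r * psf K P) ≤ 3 * L) (hT : T.Nonempty) (hTE : #T * E ≤ 1) (hTn : #T ≤ E * n)
    (hLE : 6 * L * E ≤ 1) (hrE : r ≤ E ^ 2) :
    chernoffTerm P K b L⁻¹ r T ≤ exp (-(#T * (n * (r * psf K P) - (3 * exp 5 + 2)))) := by
  have hps := psf_nonneg K P
  have hL1 : 1 ≤ L := (one_le_exp (by norm_num)).trans hL
  have ht : (0 : ℝ) < #T := by exact_mod_cast hT.card_pos
  have hn : (0 : ℝ) < n := by exact_mod_cast hT.card_pos.trans_le (card_finset_fin_le T)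
  have hTn1 : (#T : ℝ) / n ≤ 1 := by
    rw [div_le_one hn]; exact_mod_cast card_finset_fin_le T
  have hE : 0 < E := pos_of_mul_pos_left (ht.trans_le hTn) hn.le
  have hrT : r * #T ≤ E :=
    calc r * #T ≤ E ^ 2 * #T := by gcongr
      _ = E * (#T * E) := by ring
      _ ≤ E := mul_le_of_le_one_right hE.le hTE
  have hwidth := mul_psf_mul_card_le hr0 hE.le hD hTn hLE
  refine (chernoffTerm_le_of_singletons h (by positivity) (inv_le_one_of_one_le₀ hL1) hr0 hr1 hT
    hwidth).trans (exp_le_exp.2 (neg_le_neg ?_))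
  have hloss : n * (r * psf K P) * (L⁻¹ * exp 5 + r * #T + #T / n) ≤ 3 * exp 5 + 2 :=
    calc n * (r * psf K P) * (L⁻¹ * exp 5 + r * #T + #T / n)
        ≤ 3 * L * (L⁻¹ * exp 5 + E + E) := by gcongr; exact (div_le_iff₀ hn).2 hTn
      _ = 3 * exp 5 + 6 * L * E := by field_simp; ring
      _ ≤ 3 * exp 5 + 2 := by linarith
  calc #T * (n * (r * psf K P) - (3 * exp 5 + 2))
      ≤ #T * (n * (r * psf K P) * ((1 - L⁻¹ * exp 5) * (1 - r * #T) * (1 - #T / n))) := by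
        gcongr
        exact sub_le_mul_one_sub_mul_one_sub (by positivity) (by positivity) (by positivity)
          (by positivity) hTn1 hloss
    _ ≤ #T * (n * (r * psf K P) * ((1 - L⁻¹ * exp 5) * (1 + r * #T)⁻¹ * (1 - #T / n))) := by
        have := sub_nonneg.2 (inv_mul_le_one_of_le₀ hL (by positivity))
        have := sub_nonneg.2 hTn1
        gcongr
        rw [← one_div, le_div_iff₀ (by positivity)]
        nlinarith [sq_nonneg (r * (#T : ℝ))]
    _ = (1 - L⁻¹ * exp 5) * (r * psf K P * #T / (1 + r * #T)) * (n - #T) := by field_simp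

lemma sq_div_le_two_mul_psf (h : K ≤ P) (hK : 0 < K) (hps : psf K P ≤ 1 / 2) :
    (K : ℝ) ^ 2 / P ≤ 2 * psf K P := by
  have hP : (0 : ℝ) < P := by exact_mod_cast hK.trans_le h
  have hlower := sq_div_add_sq_le_psf h
  rw [div_le_iff₀ (by positivity)] at hlower
  rw [div_le_iff₀ hP]
  nlinarith [sq_nonneg (K : ℝ)]

lemma psf_le_of_sq_le_channel (hE : 0 < E) (hD : n * (r * psf K P) ≤ 3 * L)
    (hL0 : 0 ≤ L) (hEn : 1 ≤ E ^ 8 * n) (hrE : E ^ 2 ≤ r) : psf K P ≤ 3 * L * E ^ 6 := by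
  have hps := psf_nonneg K P
  have hn : (0 : ℝ) < n := pos_of_mul_pos_right (one_pos.trans_le hEn) (by positivity)
  refine le_of_mul_le_mul_left ?_ (show 0 < n * E ^ 2 by positivity)
  calc n * E ^ 2 * psf K P ≤ n * r * psf K P := by gcongr
    _ ≤ 3 * L * 1 := by linarith
    _ ≤ 3 * L * (E ^ 8 * n) := by gcongr
    _ = n * E ^ 2 * (3 * L * E ^ 6) := by ring

lemma sq_mul_sq_div_mul_exp_le (h : K ≤ P) (hK : 0 < K) (hE : 0 < E) (hE1 : E ≤ 1) (hL0 : 0 ≤ L)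
    (hLE : 6 * L * E ≤ 1) (hps : psf K P ≤ 3 * L * E ^ 6) {t s : ℝ} (ht : 0 ≤ t) (htE : t * E ≤ 1)
    (hsE : E * exp s ≤ 1) : t ^ 2 * ((K : ℝ) ^ 2 / P) * exp s ≤ t := by
  have hLEpow : ∀ m ≠ 0, 6 * L * E ^ m ≤ 1 := fun m hm =>
    (by gcongr; exact pow_le_of_le_one hE.le hE1 hm : 6 * L * E ^ m ≤ 6 * L * E).trans hLE
  have hhalf : psf K P ≤ 1 / 2 := by linarith [hLEpow 6 (by norm_num)]
  calc t ^ 2 * ((K : ℝ) ^ 2 / P) * exp s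
      ≤ t ^ 2 * (2 * (3 * L * E ^ 6)) * exp s := by
        gcongr
        exact (sq_div_le_two_mul_psf h hK hhalf).trans (by gcongr)
    _ = t * ((t * E) * (E * exp s) * (6 * L * E ^ 4)) := by ring
    _ ≤ t * (1 * 1 * 1) := by gcongr; exact hLEpow 4 (by norm_num)
    _ = t := by ring

lemma chernoffTerm_le_of_le_channel (h : K ≤ P) (hK : 24 ≤ K) (hr0 : 0 ≤ r) (hr1 : r ≤ 1)
    (hL : exp 5 ≤ L) (hD : n * (r * psf K P) ≤ 3 * L) (hT : T.Nonempty) (hTE : #T * E ≤ 1)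
    (hTn : #T ≤ E * n) (hLE : 6 * L * E ≤ 1) (hE1 : E ≤ 1) (hEL : E * exp (L / 8) ≤ 1)
    (hEn : 1 ≤ E ^ 8 * n) (hrE : E ^ 2 ≤ r) :
    chernoffTerm P K b L⁻¹ r T ≤ exp (-(#T * (n * (r * psf K P) - (3 * exp 5 + 2)))) := by
  have hps := psf_nonneg K P
  have hK' : (24 : ℝ) ≤ K := by exact_mod_cast hK
  have hL1 : 1 ≤ L := (one_le_exp (by norm_num)).trans hL
  have ht : (0 : ℝ) < #T := by exact_mod_cast hT.card_pos
  have hn : (0 : ℝ) < n := by exact_mod_cast hT.card_pos.trans_le (card_finset_fin_le T)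
  have hTn1 : (#T : ℝ) / n ≤ 1 := by
    rw [div_le_one hn]; exact_mod_cast card_finset_fin_le T
  have hE : 0 < E := pos_of_mul_pos_left (ht.trans_le hTn) hn.le
  have hwidth := mul_psf_mul_card_le hr0 hE.le hD hTn hLE
  have hu : L⁻¹ * exp 5 ≤ 1 := inv_mul_le_one_of_le₀ hL (by positivity)
  obtain ⟨s, hs⟩ : ∃ s, s = (1 - L⁻¹ * exp 5) * (n - #T) * (r * psf K P) / K := ⟨_, rfl⟩
  have hsL : s ≤ L / 8 := by
    rw [hs, div_le_iff₀ (by linarith)]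
    calc (1 - L⁻¹ * exp 5) * (n - #T) * (r * psf K P) ≤ 1 * n * (r * psf K P) := by
          have hleft : (1 - L⁻¹ * exp 5) * (n - #T) ≤ 1 * n :=
            mul_le_mul (sub_le_self 1 (by positivity)) (sub_le_self _ ht.le)
              (sub_nonneg.2 (by rwa [div_le_one hn] at hTn1)) zero_le_one
          gcongr
      _ ≤ L / 8 * 24 := by linarith
      _ ≤ L / 8 * K := by gcongr
  have hrep := sq_mul_sq_div_mul_exp_le h (by omega) hE hE1 (by positivity) hLE
    (psf_le_of_sq_le_channel hE hD (by positivity) hEn hrE) ht.le hTE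
    (le_trans (by gcongr) hEL : E * exp s ≤ 1)
  refine (chernoffTerm_le_of_repetitions h (by omega) (by positivity)
    (inv_le_one_of_one_le₀ hL1) hr0 hr1 hu hwidth hs).trans (exp_le_exp.2 ?_)
  have hloss : n * (r * psf K P) * (L⁻¹ * exp 5 + 0 + #T / n) ≤ 3 * exp 5 + 1 :=
    calc n * (r * psf K P) * (L⁻¹ * exp 5 + 0 + #T / n)
        ≤ 3 * L * (L⁻¹ * exp 5 + 0 + E) := by gcongr; exact (div_le_iff₀ hn).2 hTn
      _ = 3 * exp 5 + 3 * L * E := by field_simp; ring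
      _ ≤ 3 * exp 5 + 1 := by linarith [mul_pos (zero_lt_one.trans_le hL1) hE]
  have hmain := mul_le_mul_of_nonneg_left (sub_le_mul_one_sub_mul_one_sub
    (show 0 ≤ n * (r * psf K P) by positivity) (by positivity) le_rfl (by positivity) hTn1 hloss)
    ht.le
  have hsK : s * (K * #T)
      = #T * (n * (r * psf K P) * ((1 - L⁻¹ * exp 5) * (1 - 0) * (1 - #T / n))) := by
    rw [hs]; field_simp; ring
  linarith

end SmallSets

section UnionOverSets

variable {n K P b : ℕ} {r M A : ℝ} {T : Finset (Fin n)}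

lemma chernoffTerm_le_of_log_card_le (h : K ≤ P) (hK : 24 ≤ K) (hr0 : 0 ≤ r) (hr1 : r ≤ 1)
    (hL : exp 5 ≤ log n) (hLE : 6 * log n * exp (-(log n / 8)) ≤ 1)
    (hD : n * (r * psf K P) ≤ 3 * log n) (hT : T.Nonempty) (hTL : 8 * log #T ≤ log n) :
    chernoffTerm P K b (log n)⁻¹ r T
      ≤ exp (-(#T * (n * (r * psf K P) - (3 * exp 5 + 2)))) := by
  set L := log (n : ℝ) with hL_def
  have hL0 : 0 ≤ L := (exp_pos 5).le.trans hL
  have hn : exp L = n := by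
    rw [hL_def, exp_log]
    exact_mod_cast hT.card_pos.trans_le (card_finset_fin_le T)
  have hTexp : (#T : ℝ) ≤ exp (L / 8) := by
    rw [← log_le_iff_le_exp (by exact_mod_cast hT.card_pos)]
    linarith
  have hTE : #T * exp (-(L / 8)) ≤ 1 := by
    rwa [exp_neg, ← div_eq_mul_inv, div_le_one (exp_pos _)]
  have hTn : (#T : ℝ) ≤ exp (-(L / 8)) * n := by
    rw [← hn, ← exp_add]
    exact hTexp.trans (exp_le_exp.2 (by linarith))
  rcases le_total r (exp (-(L / 8)) ^ 2) with hrE | hrE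
  · exact chernoffTerm_le_of_channel_le h hr0 hr1 hL hD hT hTE hTn hLE hrE
  · refine chernoffTerm_le_of_le_channel h hK hr0 hr1 hL hD hT hTE hTn hLE
      (exp_le_one_iff.2 (by linarith)) ?_ ?_ hrE
    · rw [← exp_add, neg_add_cancel, exp_zero]
    · rw [← hn, ← exp_nat_mul, ← exp_add, Nat.cast_ofNat, one_le_exp_iff]
      linarith

lemma chernoffTerm_le_of_two_mul_card_le (h : K ≤ P) (hr0 : 0 ≤ r) (hr1 : r ≤ 1)
    (hL : 32 * (exp 5 + 6) ≤ log n) (hD : log n ≤ n * (r * psf K P)) (hT : 2 * #T ≤ n)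
    (hx : ∀ S : Fin n → KeyRing P K, FewRepetitions b S T →
      𝔼 x, (1 - r) ^ shareCount S T x ≤ exp (-min (31 / 32 * (r * psf K P * #T)) 5)) :
    chernoffTerm P K b (log n)⁻¹ r T ≤ exp (-(2 * n)) ∨
      chernoffTerm P K b (log n)⁻¹ r T ≤ exp (-(15 / 16 * log n * #T)) := by
  set L := log (n : ℝ) with hL_def
  have hps := psf_nonneg K P
  have hL0 : 0 < L := (by positivity : (0 : ℝ) < 32 * (exp 5 + 6)).trans_le hL
  have hL1 : 1 ≤ L := by linarith [exp_pos 5]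
  have hn : (0 : ℝ) < n := by
    have : 0 < n * (r * psf K P) := hL0.trans_le hD
    exact pos_of_mul_pos_left this (by positivity)
  have hT' : 2 * (#T : ℝ) ≤ n := by exact_mod_cast hT
  have hsmall : L⁻¹ * (exp 5 + 6) ≤ 1 / 32 := by
    rw [inv_mul_le_iff₀ hL0]; linarith
  have hterm := chernoffTerm_le_exp h (inv_nonneg.2 hL0.le) (inv_le_one_of_one_le₀ hL1) hr1 T
    (le_min (by positivity) (by norm_num)) (min_le_right _ 5) hx
  rcases le_total 5 (31 / 32 * (r * psf K P * #T)) with hbig | hbig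
  · refine Or.inl (hterm.trans (exp_le_exp.2 (neg_le_neg ?_)))
    rw [min_eq_right hbig]
    have hθ : 31 / 32 ≤ 1 - L⁻¹ * exp 5 := by linarith [inv_pos.2 hL0]
    calc 2 * (n : ℝ) ≤ 31 / 32 * 5 * (n - n / 2) := by linarith
      _ ≤ (1 - L⁻¹ * exp 5) * 5 * (n - #T) := by gcongr <;> linarith
  · refine Or.inr (hterm.trans (exp_le_exp.2 (neg_le_neg ?_)))
    rw [min_eq_left hbig]
    have hTn : (#T : ℝ) / n ≤ L⁻¹ * 6 := by
      rw [inv_mul_eq_div, div_le_div_iff₀ hn hL0]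
      calc #T * L ≤ #T * (n * (r * psf K P)) := by gcongr
        _ = r * psf K P * #T * n := by ring
        _ ≤ 6 * n := by gcongr; linarith
    have hloss : 31 / 32 ≤ (1 - L⁻¹ * exp 5) * (1 - #T / n) :=
      le_trans (by linarith) (one_sub_add_le_mul (by positivity) (by positivity))
    calc 15 / 16 * L * #T ≤ 31 / 32 * (L * #T) * (31 / 32) := by
          nlinarith [mul_nonneg hL0.le (#T).cast_nonneg (α := ℝ)]
      _ ≤ 31 / 32 * (n * (r * psf K P) * #T) * ((1 - L⁻¹ * exp 5) * (1 - #T / n)) := by gcongr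
      _ = (1 - L⁻¹ * exp 5) * (31 / 32 * (r * psf K P * #T)) * (n - #T) := by field_simp

lemma mul_log_sub_log_le {x y : ℝ} (hx : 0 < x) (hy : 0 < y) :
    y * (log x - log y) ≤ x - y := by
  rw [← log_div hx.ne' hy.ne']
  calc y * log (x / y) ≤ y * (x / y - 1) := by
        gcongr
        exact log_le_sub_one_of_pos (by positivity)
    _ = x - y := by field_simp

lemma choose_mul_chernoffTerm_le (h : K ≤ P) (hK : 24 ≤ K) (hr0 : 0 ≤ r) (hr1 : r ≤ 1)
    (hL : 32 * (exp 5 + 6) ≤ log n) (hLE : 6 * log n * exp (-(log n / 8)) ≤ 1)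
    (hM : 0 ≤ M) (hA : 0 ≤ A) (hAL : A + M + 2 ≤ log n / 16)
    (hAD : log n + M + A + (3 * exp 5 + 4) ≤ n * (r * psf K P))
    (hD : n * (r * psf K P) ≤ 3 * log n) (hT : T.Nonempty) (hTn : 2 * #T ≤ n)
    (hx : ∀ S : Fin n → KeyRing P K, FewRepetitions b S T →
      𝔼 x, (1 - r) ^ shareCount S T x ≤ exp (-min (31 / 32 * (r * psf K P * #T)) 5)) :
    n.choose #T * (exp M * chernoffTerm P K b (log n)⁻¹ r T) ≤ exp (-A) * (1 / 2) ^ #T := by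
  have ht : (1 : ℝ) ≤ #T := by exact_mod_cast hT.card_pos
  have hn : 0 < n := hT.card_pos.trans_le (card_finset_fin_le T)
  have hTn' : 2 * (#T : ℝ) ≤ n := by exact_mod_cast hTn
  have hexp5 := exp_pos 5
  suffices ∃ x, chernoffTerm P K b (log n)⁻¹ r T ≤ exp (-x) ∧
      A + #T * (2 + log n - log #T) ≤ x - M by
    obtain ⟨x, hterm, hx⟩ := this
    refine le_trans ?_ (choose_mul_exp_neg_le hn hT.card_pos hx)
    rw [neg_sub, sub_eq_add_neg, exp_add]
    gcongr
  have hAT : A + M ≤ #T * (A + M) := le_mul_of_one_le_left (by positivity) ht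
  by_cases hTL : 8 * log #T ≤ log n
  · refine ⟨_, chernoffTerm_le_of_log_card_le h hK hr0 hr1 (by linarith) hLE hD hT hTL, ?_⟩
    have := mul_le_mul_of_nonneg_left hAD (#T).cast_nonneg (α := ℝ)
    have := mul_nonneg (#T).cast_nonneg (α := ℝ) (log_nonneg ht)
    linarith
  rcases chernoffTerm_le_of_two_mul_card_le h hr0 hr1 hL (by linarith) hTn hx with hterm | hterm
  · refine ⟨_, hterm, ?_⟩
    have := mul_log_sub_log_le (x := n) (y := #T) (by exact_mod_cast hn) (by linarith)
    linarith [log_le_self n.cast_nonneg]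
  · refine ⟨_, hterm, ?_⟩
    have hexponent : A + M + 2 + log n - log #T ≤ 15 / 16 * log n := by linarith
    linarith [mul_le_mul_of_nonneg_left hexponent (#T).cast_nonneg (α := ℝ)]

lemma exists_channel_of_le_mul_pef {p D : ℝ} (hD0 : 0 < D) (hD : D ≤ n * pef K P p) :
    ∃ r, 0 ≤ r ∧ r ≤ p ∧ n * (r * psf K P) = D := by
  have hne : n * psf K P ≠ 0 := fun h0 => by
    rw [pef, mul_left_comm, h0, mul_zero] at hD
    exact hD0.not_ge hD
  have hpos : 0 < n * psf K P := (mul_nonneg n.cast_nonneg (psf_nonneg K P)).lt_of_ne' hne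
  refine ⟨D / (n * psf K P), by positivity, ?_, ?_⟩
  · rw [div_le_iff₀ hpos, mul_left_comm]
    exact hD
  · rw [mul_left_comm, div_mul_cancel₀ _ hne]

lemma gonMeasure_hasSparseBoundary_le_exp_neg {k : ℕ} {p c : ℝ} (hk : 1 ≤ k) (h : K ≤ P)
    (hK : 65600 * exp 134 ≤ K) (hp1 : p ≤ 1) (hc : 0 < c) (hcP : c * n ≤ P) (hA : 0 ≤ A)
    (hAK : A + 2 ≤ K / 2 - log K + log c) (hL : 32 * (exp 5 + 6) ≤ log n)
    (hLE : 6 * log n * exp (-(log n / 8)) ≤ 1)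
    (hAL : A + (k - 1) * log (log n) + (3 * exp 5 + 4) ≤ log n / 16)
    (hAp : log n + (k - 1) * log (log n) + A + (3 * exp 5 + 4) ≤ n * pef K P p) :
    gonMeasure n K P p {ω | HasSparseBoundary (gonGraph ω) k}
      ≤ ENNReal.ofReal (2 * exp (-A)) := by
  have hk' : (0 : ℝ) ≤ k - 1 := sub_nonneg.2 (by exact_mod_cast hk)
  have hexp5 := exp_pos 5
  have hK256 : 256 ≤ K := by
    have : (256 : ℝ) ≤ K := by linarith [add_one_le_exp (134 : ℝ)]
    exact_mod_cast this
  have hLpos : 0 < log n := by linarith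
  have hM : 0 ≤ (k - 1) * log (log n) := mul_nonneg hk' (log_nonneg (by linarith))
  obtain ⟨r, hr0, hrp, hD⟩ := exists_channel_of_le_mul_pef (by linarith) hAp
  obtain ⟨b, hb, hx⟩ := exists_forall_fewRepetitions_expect_pow_le (ι := Fin n) h hK
  have hθ : ((log n)⁻¹ ^ (k - 1))⁻¹ = exp ((k - 1) * log (log n)) := by
    rw [inv_pow, inv_inv, ← Nat.cast_pred hk, exp_nat_mul, exp_log hLpos]
  refine (gonMeasure_hasSparseBoundary_le h hr0 hrp hp1 (inv_pos.2 hLpos)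
    (inv_le_one_of_one_le₀ (by linarith)) k b).trans (ENNReal.ofReal_le_ofReal ?_)
  rw [hθ, two_mul]
  gcongr
  · exact expect_indicator_not_fewRepetitions_le h hK256 hc (by simpa using hcP) hb hA hAK
  · refine sum_le_of_choose_mul_le _ (fun T hT => (mem_filter.1 hT).2.1) (exp_pos _).le
      fun T hT => ?_
    obtain ⟨-, hTne, hTn⟩ := mem_filter.1 hT
    rw [Fintype.card_fin]
    exact choose_mul_chernoffTerm_le h (by omega) hr0 (hrp.trans hp1) hL hLE hM hA (by linarith)
      (by linarith) (by linarith) hTne hTn fun S hS => hx S T hTne hS r hr0 (hrp.trans hp1)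

end UnionOverSets

section Asymptotics

lemma eventually_mul_log_le (m : ℝ) {ε : ℝ} (hε : 0 < ε) :
    ∀ᶠ x : ℝ in atTop, m * log x ≤ ε * x := by
  filter_upwards [(isLittleO_log_id_atTop.const_mul_left m).bound hε, eventually_ge_atTop 0]
    with x hx hx0
  rw [norm_eq_abs, norm_eq_abs, id, abs_of_nonneg hx0] at hx
  exact (le_abs_self _).trans hx

lemma tendsto_mul_exp_neg_div_atTop (a : ℝ) {b : ℝ} (hb : 0 < b) :
    Tendsto (fun x : ℝ => a * x * exp (-(x / b))) atTop (nhds 0) := by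
  have h := ((tendsto_pow_mul_exp_neg_atTop_nhds_zero 1).comp
    (tendsto_id.atTop_div_const hb)).const_mul (a * b)
  rw [mul_zero] at h
  refine h.congr fun x => ?_
  simp only [Function.comp, id, pow_one]
  field_simp

lemma tendsto_log_natCast_atTop : Tendsto (fun n : ℕ => log n) atTop atTop :=
  tendsto_log_atTop.comp tendsto_natCast_atTop_atTop

lemma tendsto_measure_one_of_compl_subset {Ω : ℕ → Type*} [∀ n, MeasurableSpace (Ω n)]
    (μ : ∀ n, Measure (Ω n)) [∀ n, IsProbabilityMeasure (μ n)] {E B : ∀ n, Set (Ω n)}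
    (hEB : ∀ᶠ n in atTop, (E n)ᶜ ⊆ B n) (hB : Tendsto (fun n => μ n (B n)) atTop (nhds 0)) :
    Tendsto (fun n => μ n (E n)) atTop (nhds 1) := by
  have hlower : Tendsto (fun n => 1 - μ n (B n)) atTop (nhds 1) := by
    simpa using ENNReal.Tendsto.sub tendsto_const_nhds hB (Or.inl ENNReal.one_ne_top)
  refine tendsto_of_tendsto_of_tendsto_of_le_of_le' hlower tendsto_const_nhds ?_
    (Eventually.of_forall fun n => prob_le_one)
  filter_upwards [hEB] with n hn
  rw [tsub_le_iff_right, ← measure_univ (μ := μ n), ← Set.union_compl_self (E n)]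
  exact (measure_union_le _ _).trans (by gcongr)

variable {k : ℕ} {K P : ℕ → ℕ} {p : ℕ → ℝ}

lemma tendsto_keyRing_size_atTop (hKP : ∀ n, K n ≤ P n) (hp1 : ∀ n, p n ≤ 1) {c : ℝ} (hc : 0 < c)
    (hcP : ∀ᶠ n : ℕ in atTop, c * n ≤ P n)
    (hpe : ∀ᶠ n : ℕ in atTop, log n ≤ n * pef (K n) (P n) (p n)) :
    Tendsto (fun n => (K n : ℝ)) atTop atTop := by
  refine tendsto_atTop_mono' _ ?_
    (tendsto_sqrt_atTop.comp (tendsto_log_natCast_atTop.const_mul_atTop hc))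
  filter_upwards [hcP, hpe, eventually_ge_atTop 1] with n hcP hpe hn
  have : (0 : ℝ) < n := by exact_mod_cast hn
  have hP : (0 : ℝ) < P n := (by positivity : 0 < c * n).trans_le hcP
  have hps := psf_nonneg (K n) (P n)
  refine sqrt_le_iff.2 ⟨(K n).cast_nonneg, ?_⟩
  calc c * log n ≤ c * (n * pef (K n) (P n) (p n)) := by gcongr
    _ = p n * (psf (K n) (P n) * (c * n)) := by rw [pef]; ring
    _ ≤ 1 * (psf (K n) (P n) * P n) := by gcongr; exact hp1 n
    _ ≤ (K n : ℝ) ^ 2 := by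
        rw [one_mul, ← le_div_iff₀ hP]
        exact psf_le_sq_div (hKP n)

lemma tendsto_gonMeasure_hasSparseBoundary (hk : 1 ≤ k) (hKP : ∀ n, K n ≤ P n)
    (hp1 : ∀ n, p n ≤ 1) (hP : ∃ c : ℝ, 0 < c ∧ ∀ᶠ n : ℕ in atTop, c * n ≤ P n)
    (hpe : Tendsto (fun n : ℕ => n * pef (K n) (P n) (p n) - (log n + (k - 1) * log (log n)))
      atTop atTop) :
    Tendsto (fun n => gonMeasure n (K n) (P n) (p n) {ω | HasSparseBoundary (gonGraph ω) k})
      atTop (nhds 0) := by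
  obtain ⟨c, hc, hcP⟩ := hP
  have hL := tendsto_log_natCast_atTop
  have hk' : (0 : ℝ) ≤ k - 1 := sub_nonneg.2 (by exact_mod_cast hk)
  have hKtop := tendsto_keyRing_size_atTop hKP hp1 hc hcP <| by
    filter_upwards [hpe.eventually_ge_atTop 0, hL.eventually_ge_atTop 1] with n hpe hL1
    linarith [mul_nonneg hk' (log_nonneg hL1)]
  have hbound : ∀ A : ℝ, 0 ≤ A → ∀ᶠ n : ℕ in atTop,
      gonMeasure n (K n) (P n) (p n) {ω | HasSparseBoundary (gonGraph ω) k}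
        ≤ ENNReal.ofReal (2 * exp (-A)) := by
    intro A hA
    filter_upwards [hcP, hKtop.eventually_ge_atTop (65600 * exp 134),
      hKtop.eventually_ge_atTop (4 * (A + 2 - log c)),
      hKtop.eventually (eventually_mul_log_le 1 (by norm_num : (0 : ℝ) < 1 / 4)),
      hpe.eventually_ge_atTop (A + (3 * exp 5 + 4)), hL.eventually_ge_atTop (32 * (exp 5 + 6)),
      hL.eventually_ge_atTop (32 * (A + (3 * exp 5 + 4))),
      hL.eventually (eventually_mul_log_le (k - 1) (by norm_num : (0 : ℝ) < 1 / 32)),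
      hL.eventually ((tendsto_mul_exp_neg_div_atTop 6 (b := 8) (by norm_num)).eventually_le_const
        one_pos)] with n hcP hK hKA hlogK hpeA hL0 hLA hloglog hLE
    exact gonMeasure_hasSparseBoundary_le_exp_neg hk (hKP n) hK (hp1 n) hc hcP hA (by linarith)
      hL0 hLE (by linarith) (by linarith)
  have hvanish : Tendsto (fun A : ℝ => ENNReal.ofReal (2 * exp (-A))) atTop (nhds 0) := by
    simpa using ENNReal.tendsto_ofReal (tendsto_exp_neg_atTop_nhds_zero.const_mul 2)
  refine ENNReal.tendsto_nhds_zero.2 fun ε hε => ?_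
  obtain ⟨A, hA, hAε⟩ :=
    ((eventually_ge_atTop 0).and (ENNReal.tendsto_nhds_zero.1 hvanish ε hε)).exists
  exact (hbound A hA).mono fun n hn => hn.trans hAε

theorem gon_one_law_general (hk : 1 ≤ k) (hKP : ∀ n, K n ≤ P n) (hp0 : ∀ n, 0 ≤ p n)
    (hp1 : ∀ n, p n ≤ 1) (hP : ∃ c : ℝ, 0 < c ∧ ∀ᶠ n : ℕ in atTop, c * n ≤ P n)
    (hpe : Tendsto (fun n : ℕ => n * pef (K n) (P n) (p n) - (log n + (k - 1) * log (log n)))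
      atTop atTop) :
    Tendsto (fun n => gonMeasure n (K n) (P n) (p n) {ω | KConnected (gonGraph ω) k})
      atTop (nhds 1) ∧
    Tendsto (fun n => gonMeasure n (K n) (P n) (p n) {ω | k ≤ minDeg (gonGraph ω)})
      atTop (nhds 1) := by
  have hsparse := tendsto_gonMeasure_hasSparseBoundary hk hKP hp1 hP hpe
  have := fun n => isProbabilityMeasure_gonMeasure (n := n) (hKP n) (hp0 n) (hp1 n)
  constructor <;> refine tendsto_measure_one_of_compl_subset _ ?_ hsparse
  · filter_upwards [eventually_ge_atTop k] with n hn ω hω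
    exact hasSparseBoundary_of_not_kConnected hk (by simpa using hn) hω
  · filter_upwards [eventually_ge_atTop 2] with n hn ω hω
    exact hasSparseBoundary_of_not_le_minDeg (by simpa using hn) hω

end Asymptotics

end

/-- one-law for `k`-connectivity and minimum degree in `𝔾_on`. -/
theorem gon_one_law
    (k : ℕ) (hk : 1 ≤ k) (K P : ℕ → ℕ) (p : ℕ → ℝ)
    (hKP : ∀ n, K n ≤ P n) (hp0 : ∀ n, 0 < p n) (hp1 : ∀ n, p n < 1)
    (hK2 : ∀ᶠ n : ℕ in atTop, 2 ≤ K n)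
    (hP : ∃ c : ℝ, 0 < c ∧ ∀ᶠ n : ℕ in atTop, c * (n : ℝ) ≤ (P n : ℝ))
    (hKPo : Tendsto (fun n : ℕ => (K n : ℝ) / (P n : ℝ)) atTop (nhds 0))
    (α : ℕ → ℝ)
    (hα : ∀ n, 1 ≤ n → pef (K n) (P n) (p n) =
      (Real.log n + ((k : ℝ) - 1) * Real.log (Real.log n) + α n) / (n : ℝ))
    (hαtop : Tendsto α atTop atTop) :
    Tendsto (fun n : ℕ => gonMeasure n (K n) (P n) (p n)
        {ω | KConnected (gonGraph ω) k}) atTop (nhds 1) ∧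
    Tendsto (fun n : ℕ => gonMeasure n (K n) (P n) (p n)
        {ω | k ≤ minDeg (gonGraph ω)}) atTop (nhds 1) := by
  refine gon_one_law_general hk hKP (fun n => (hp0 n).le) (fun n => (hp1 n).le) hP
    (hαtop.congr' ?_)
  filter_upwards [eventually_ge_atTop 1] with n hn
  rw [hα n hn, mul_div_cancel₀ _ (by positivity), add_sub_cancel_left]
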